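/- arXiv:1912.13342 — 4 statements merged into one kernel-verified Lean document; each statement's English description precedes it below -/
import Mathlib

section
/- Let α > −1 and p ∈ [1, ∞). There is a constant c(α, p) > 0 such that for every n ≥ 2 and every polynomial P of degree at most n, ∫₀¹ t^α |P(t)|^p dt ≥ c(α, p) · |P(0)|^p · n^{−(2 + 2α)}. -/
/-!
Markov's inequality keeps a polynomial of degree `N` above half of its maximum on `[a, b]` on an
interval of length comparable to `(b - a) / N ^ 2`, so `max |G| ^ p ≲ N ^ 2 ∫ |G| ^ p` for every
`p > 0`. On `[1 / n ^ 2, 1]` Chebyshev's extension inequality bounds `|G 0|` by a constant times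
this maximum as long as `N = O(n)`. The weight `t ^ α` enters by taking `G = P * S ^ k`, where `S`
has degree `n`, `S 0 = 1` and `|S t| ≤ 1 / (n ^ 2 t)`: for `k p ≥ -α` the factor
`|S t| ^ (k p)` is at most `(n ^ 2 t) ^ α` once `n ^ 2 t ≥ 1`.
-/

open Polynomial Set MeasureTheory

section Chebyshev

theorem iterate_derivative_comp_C_add_C_mul_X {R : Type*} [CommSemiring R] (F : R[X]) (m r : R)
    (k : ℕ) :
    derivative^[k] (F.comp (C m + C r * X)) =
      C (r ^ k) * (derivative^[k] F).comp (C m + C r * X) := by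
  induction k with
  | zero => simp
  | succ k ih =>
    rw [Function.iterate_succ_apply', ih, derivative_C_mul, derivative_comp,
      Function.iterate_succ_apply']
    simp only [derivative_add, derivative_C, derivative_C_mul, derivative_X, pow_succ, C_mul]
    ring

theorem abs_eval_iterate_derivative_le_mul_eval_T {N : ℕ} {F : ℝ[X]} (hdeg : F.natDegree ≤ N)
    {B : ℝ} (hF : ∀ y ∈ Icc (-1) 1, |F.eval y| ≤ B) (k : ℕ) {y : ℝ} (hy : 1 ≤ y) :
    |(derivative^[k] F).eval y| ≤ B * (derivative^[k] (Chebyshev.T ℝ N)).eval y := by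
  have hB : 0 ≤ B := (abs_nonneg _).trans (hF 0 (by simp))
  rcases hB.eq_or_lt with rfl | hB
  · have hF0 : F = 0 := eq_zero_of_infinite_isRoot F <|
      (Icc_infinite (by norm_num : (-1 : ℝ) < 1)).mono fun x hx => abs_nonpos_iff.1 (hF x hx)
    simp [hF0]
  have scaled (s : ℝ) (hs : |s| = B⁻¹) :
      s * (derivative^[k] F).eval y ≤ (derivative^[k] (Chebyshev.T ℝ N)).eval y := by
    have hdeg' : (C s * F).degree ≤ N :=
      degree_le_of_natDegree_le ((natDegree_C_mul_le s F).trans hdeg)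
    have hbound : ∀ x ∈ Icc (-1) 1, |(C s * F).eval x| ≤ 1 := fun x hx => by
      rw [eval_mul, eval_C, abs_mul, hs, inv_mul_le_one₀ hB]
      exact hF x hx
    simpa only [iterate_derivative_C_mul, eval_mul, eval_C] using
      Chebyshev.eval_iterate_derivative_le_of_forall_abs_le_one (k := k) hy hdeg' hbound
  have hpos := scaled B⁻¹ (abs_of_pos (inv_pos.2 hB))
  have hneg := scaled (-B⁻¹) (by rw [abs_neg, abs_of_pos (inv_pos.2 hB)])
  rw [neg_mul, ← mul_neg] at hneg
  exact abs_le'.2 ⟨(inv_mul_le_iff₀ hB).1 hpos, (inv_mul_le_iff₀ hB).1 hneg⟩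

theorem abs_pow_mul_abs_eval_iterate_derivative_le {N : ℕ} {F : ℝ[X]} (hdeg : F.natDegree ≤ N)
    {m r B : ℝ} (hF : ∀ y ∈ Icc (-1) 1, |F.eval (m + r * y)| ≤ B) (k : ℕ) {y : ℝ} (hy : 1 ≤ y) :
    |r| ^ k * |(derivative^[k] F).eval (m + r * y)| ≤
      B * (derivative^[k] (Chebyshev.T ℝ N)).eval y := by
  have hlin : (C m + C r * X : ℝ[X]).natDegree ≤ 1 := by compute_degree
  have hdeg' : (F.comp (C m + C r * X)).natDegree ≤ N :=
    natDegree_comp_le.trans (by nlinarith)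
  have h := abs_eval_iterate_derivative_le_mul_eval_T hdeg' (by simpa using hF) k hy
  simpa [iterate_derivative_comp_C_add_C_mul_X, abs_mul, abs_pow] using h

/-- **Markov's inequality**, with twice the optimal constant. -/
theorem sub_mul_abs_eval_derivative_le {N : ℕ} {F : ℝ[X]} (hdeg : F.natDegree ≤ N) {a b B : ℝ}
    (hF : ∀ t ∈ Icc a b, |F.eval t| ≤ B) {x : ℝ} (hx : x ∈ Icc a b) :
    (b - a) * |(derivative F).eval x| ≤ 4 * N ^ 2 * B := by
  -- Chebyshev's bound at the endpoint `x` of the longer of the intervals `[a, x]` and `[x, b]`.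
  have endpoint (z : ℝ) (hz : z ∈ Icc a b) :
      |(x - z) / 2| * |(derivative F).eval x| ≤ B * N ^ 2 := by
    have hF' : ∀ y ∈ Icc (-1 : ℝ) 1, |F.eval ((x + z) / 2 + (x - z) / 2 * y)| ≤ B := by
      refine fun y hy => hF _ ⟨?_, ?_⟩ <;> nlinarith [hx.1, hx.2, hz.1, hz.2, hy.1, hy.2]
    have h := abs_pow_mul_abs_eval_iterate_derivative_le hdeg hF' 1 le_rfl
    rw [show (x + z) / 2 + (x - z) / 2 * 1 = x by ring] at h
    simpa [Chebyshev.derivative_T_eval_one] using h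
  obtain ⟨z, hz, hlong⟩ : ∃ z ∈ Icc a b, (b - a) / 4 ≤ |(x - z) / 2| := by
    rcases le_total ((a + b) / 2) x with h | h
    · exact ⟨a, left_mem_Icc.2 (hx.1.trans hx.2), le_abs.2 (.inl (by linarith))⟩
    · exact ⟨b, right_mem_Icc.2 (hx.1.trans hx.2), le_abs.2 (.inr (by linarith))⟩
  linarith [endpoint z hz, mul_le_mul_of_nonneg_right hlong (abs_nonneg ((derivative F).eval x))]

theorem arcosh_le_sqrt {y : ℝ} (hy : 1 ≤ y) : Real.arcosh y ≤ √(2 * (y - 1)) := by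
  refine Real.le_sqrt_of_sq_le ?_
  set θ := Real.arcosh y with hθ
  have hθ0 : 0 ≤ θ / 2 := div_nonneg (Real.arcosh_nonneg hy) zero_le_two
  have hsq : (θ / 2) ^ 2 ≤ Real.sinh (θ / 2) ^ 2 :=
    pow_le_pow_left₀ hθ0 (Real.self_le_sinh_iff.2 hθ0) 2
  have hcosh := Real.cosh_two_mul (θ / 2)
  rw [Real.cosh_sq, mul_div_cancel₀ θ two_ne_zero, hθ, Real.cosh_arcosh hy, ← hθ] at hcosh
  linarith

theorem eval_T_le_cosh (N : ℕ) {y : ℝ} (hy : 1 ≤ y) :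
    (Chebyshev.T ℝ N).eval y ≤ Real.cosh (N * √(2 * (y - 1))) := by
  have hθ := Real.arcosh_nonneg hy
  conv_lhs => rw [← Real.cosh_arcosh hy]
  rw [Chebyshev.T_real_cosh, Int.cast_natCast, Real.cosh_le_cosh, abs_of_nonneg (by positivity),
    abs_of_nonneg (by positivity)]
  gcongr
  exact arcosh_le_sqrt hy

theorem abs_eval_le_mul_cosh {N : ℕ} {F : ℝ[X]} (hdeg : F.natDegree ≤ N) {a b B : ℝ} (hab : a < b)
    (hF : ∀ t ∈ Icc a b, |F.eval t| ≤ B) {x : ℝ} (hx : x ≤ a) :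
    |F.eval x| ≤ B * Real.cosh (N * √(4 * (a - x) / (b - a))) := by
  have hlen : 0 < b - a := sub_pos.2 hab
  have hB : 0 ≤ B := (abs_nonneg _).trans (hF a (left_mem_Icc.2 hab.le))
  set y : ℝ := (a + b - 2 * x) / (b - a) with hy
  have hy_sub : 2 * (y - 1) = 4 * (a - x) / (b - a) := by
    rw [hy]
    field_simp
    ring
  have hy_le : 1 ≤ y := by
    rw [hy, one_le_div hlen]
    linarith
  have hF' : ∀ z ∈ Icc (-1 : ℝ) 1, |F.eval ((a + b) / 2 + (a - b) / 2 * z)| ≤ B := by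
    refine fun z hz => hF _ ⟨?_, ?_⟩ <;> nlinarith [hz.1, hz.2]
  have hxy : (a + b) / 2 + (a - b) / 2 * y = x := by
    rw [hy]
    field_simp
    ring
  have hT : |F.eval x| ≤ B * (Chebyshev.T ℝ N).eval y := by
    simpa [hxy] using abs_pow_mul_abs_eval_iterate_derivative_le hdeg hF' 0 hy_le
  rw [← hy_sub]
  exact hT.trans (mul_le_mul_of_nonneg_left (eval_T_le_cosh N hy_le) hB)

theorem abs_eval_zero_le_mul_cosh {n m : ℕ} (hn : 2 ≤ n) {G : ℝ[X]} (hdeg : G.natDegree ≤ m * n)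
    {B : ℝ} (hG : ∀ t ∈ Icc (1 / (n : ℝ) ^ 2) 1, |G.eval t| ≤ B) :
    |G.eval 0| ≤ B * Real.cosh (3 * m) := by
  have hn4 : (4 : ℝ) ≤ (n : ℝ) ^ 2 := by exact_mod_cast Nat.pow_le_pow_left hn 2
  have hδ : 1 / (n : ℝ) ^ 2 < 1 := (div_lt_one (by linarith)).2 (by linarith)
  have hB : 0 ≤ B := (abs_nonneg _).trans (hG 1 ⟨hδ.le, le_rfl⟩)
  have hsqrt : √(4 * (1 / (n : ℝ) ^ 2 - 0) / (1 - 1 / (n : ℝ) ^ 2)) ≤ 3 / n := by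
    refine Real.sqrt_le_iff.2 ⟨by positivity, ?_⟩
    rw [div_pow, div_le_iff₀ (sub_pos.2 hδ)]
    field_simp
    linarith
  refine (abs_eval_le_mul_cosh hdeg hδ hG (by positivity)).trans ?_
  refine mul_le_mul_of_nonneg_left (Real.cosh_le_cosh.2 ?_) hB
  rw [abs_of_nonneg (by positivity), abs_of_nonneg (by positivity)]
  calc ((m * n : ℕ) : ℝ) * √(4 * (1 / (n : ℝ) ^ 2 - 0) / (1 - 1 / (n : ℝ) ^ 2))
      ≤ (m * n : ℕ) * (3 / n) := by gcongr
    _ = 3 * m := by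
      push_cast
      field_simp

end Chebyshev

section Lp

variable {p : ℝ}

theorem continuous_abs_eval_rpow (G : ℝ[X]) (hp : 0 ≤ p) :
    Continuous fun t => |G.eval t| ^ p :=
  G.continuous.abs.rpow_const fun _ => .inr hp

theorem half_le_abs_eval_of_abs_sub_le {N : ℕ} {G : ℝ[X]} (hdeg : G.natDegree ≤ N)
    {a b x₀ t : ℝ} (hx₀ : x₀ ∈ Icc a b) (hmax : ∀ s ∈ Icc a b, |G.eval s| ≤ |G.eval x₀|)
    (ht : t ∈ Icc a b) (hclose : 8 * N ^ 2 * |t - x₀| ≤ b - a) :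
    |G.eval x₀| / 2 ≤ |G.eval t| := by
  rcases eq_or_ne t x₀ with rfl | hne
  · linarith [abs_nonneg (G.eval t)]
  have hab : 0 < b - a := by
    rcases hne.lt_or_gt with h | h <;> linarith [ht.1, ht.2, hx₀.1, hx₀.2]
  set M := |G.eval x₀|
  have hderiv : ∀ s ∈ Icc a b, ‖(derivative G).eval s‖ ≤ 4 * N ^ 2 * M / (b - a) := fun s hs =>
    (le_div_iff₀' hab).2 (sub_mul_abs_eval_derivative_le hdeg hmax hs)
  have hlip : |G.eval t - G.eval x₀| ≤ 4 * N ^ 2 * M / (b - a) * |t - x₀| :=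
    (convex_Icc a b).norm_image_sub_le_of_norm_hasDerivWithin_le
      (fun s _ => (G.hasDerivAt s).hasDerivWithinAt) hderiv hx₀ ht
  have hhalf : 4 * N ^ 2 * M / (b - a) * |t - x₀| ≤ M / 2 := by
    rw [div_mul_eq_mul_div, div_le_iff₀ hab]
    nlinarith [abs_nonneg (G.eval x₀)]
  rw [abs_sub_comm] at hlip
  linarith [abs_sub_abs_le_abs_sub (G.eval x₀) (G.eval t)]

theorem exists_subinterval_length_eq {a b x h : ℝ} (hx : x ∈ Icc a b) (hh0 : 0 ≤ h)
    (hh : h ≤ (b - a) / 2) : ∃ u, a ≤ u ∧ u + h ≤ b ∧ x ∈ Icc u (u + h) := by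
  rcases le_total x ((a + b) / 2) with hxm | hxm
  · exact ⟨x, hx.1, by linarith, le_rfl, by linarith⟩
  · exact ⟨x - h, by linarith, by linarith [hx.2], by linarith, by linarith⟩

theorem sub_mul_le_integral_of_forall_le {f : ℝ → ℝ} {a b u v c : ℝ} (hau : a ≤ u) (huv : u ≤ v)
    (hvb : v ≤ b) (hf : Continuous f) (hf0 : ∀ t, 0 ≤ f t) (hc : ∀ t ∈ Icc u v, c ≤ f t) :
    (v - u) * c ≤ ∫ t in a..b, f t := calc
  (v - u) * c = ∫ _ in u..v, c := by simp
  _ ≤ ∫ t in u..v, f t :=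
    intervalIntegral.integral_mono_on huv intervalIntegrable_const (hf.intervalIntegrable _ _) hc
  _ ≤ ∫ t in a..b, f t :=
    intervalIntegral.integral_mono_interval hau huv hvb (.of_forall hf0)
      (hf.intervalIntegrable _ _)

/-- **Nikolskii's inequality** between the sup norm and the `L ^ p` norm. -/
theorem sub_mul_abs_eval_rpow_le_integral {N : ℕ} (hN : N ≠ 0) {G : ℝ[X]} (hdeg : G.natDegree ≤ N)
    {a b : ℝ} (hp : 0 < p) {x : ℝ} (hx : x ∈ Icc a b) :
    (b - a) * |G.eval x| ^ p ≤ 8 * N ^ 2 * 2 ^ p * ∫ t in a..b, |G.eval t| ^ p := by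
  have hab : a ≤ b := hx.1.trans hx.2
  obtain ⟨x₀, hx₀, hmax⟩ :=
    isCompact_Icc.exists_isMaxOn (nonempty_Icc.2 hab) G.continuous.abs.continuousOn
  have hN1 : (1 : ℝ) ≤ N := mod_cast Nat.one_le_iff_ne_zero.2 hN
  set h : ℝ := (b - a) / (8 * N ^ 2) with hh
  have hh0 : 0 ≤ h := div_nonneg (sub_nonneg.2 hab) (by positivity)
  have hh2 : h ≤ (b - a) / 2 := by
    have : 0 ≤ b - a := sub_nonneg.2 hab
    rw [hh]
    gcongr
    nlinarith
  obtain ⟨u, hau, hub, hxu⟩ := exists_subinterval_length_eq hx₀ hh0 hh2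
  have hlarge : ∀ t ∈ Icc u (u + h), (|G.eval x₀| / 2) ^ p ≤ |G.eval t| ^ p := by
    intro t ht
    have hclose : 8 * N ^ 2 * |t - x₀| ≤ b - a := by
      rw [mul_comm, ← le_div_iff₀ (by positivity)]
      exact abs_le.2 ⟨by linarith [ht.1, hxu.2], by linarith [ht.2, hxu.1]⟩
    gcongr
    exact half_le_abs_eval_of_abs_sub_le hdeg hx₀ hmax ⟨hau.trans ht.1, ht.2.trans hub⟩ hclose
  have hlower : h * (|G.eval x₀| / 2) ^ p ≤ ∫ t in a..b, |G.eval t| ^ p := by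
    simpa only [add_sub_cancel_left] using
      sub_mul_le_integral_of_forall_le hau (le_add_of_nonneg_right hh0) hub
        (continuous_abs_eval_rpow G hp.le) (fun t => by positivity) hlarge
  have hx_le : |G.eval x| ≤ |G.eval x₀| := hmax hx
  calc (b - a) * |G.eval x| ^ p ≤ (b - a) * |G.eval x₀| ^ p :=
        mul_le_mul_of_nonneg_left (Real.rpow_le_rpow (abs_nonneg _) hx_le hp.le)
          (sub_nonneg.2 hab)
    _ = 8 * N ^ 2 * 2 ^ p * (h * (|G.eval x₀| / 2) ^ p) := by
        rw [hh, Real.div_rpow (abs_nonneg _) zero_le_two]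
        field_simp
    _ ≤ _ := by gcongr

theorem abs_eval_zero_rpow_le_integral {n m : ℕ} (hn : 2 ≤ n) (hm : m ≠ 0) {G : ℝ[X]}
    (hdeg : G.natDegree ≤ m * n) (hp : 0 < p) :
    |G.eval 0| ^ p ≤ 16 * m ^ 2 * (2 * Real.cosh (3 * m)) ^ p * n ^ 2 *
      ∫ t in (1 / (n : ℝ) ^ 2)..1, |G.eval t| ^ p := by
  have hn' : (2 : ℝ) ≤ n := mod_cast hn
  have hδ : 1 / (n : ℝ) ^ 2 ≤ 1 / 2 := one_div_le_one_div_of_le two_pos (by nlinarith)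
  obtain ⟨x₀, hx₀, hmax⟩ := isCompact_Icc.exists_isMaxOn
    (nonempty_Icc.2 (by linarith : 1 / (n : ℝ) ^ 2 ≤ 1)) G.continuous.abs.continuousOn
  have hextend : |G.eval 0| ≤ |G.eval x₀| * Real.cosh (3 * m) :=
    abs_eval_zero_le_mul_cosh hn hdeg hmax
  have hnikolskii := sub_mul_abs_eval_rpow_le_integral (by positivity) hdeg hp hx₀
  set I := ∫ t in (1 / (n : ℝ) ^ 2)..1, |G.eval t| ^ p
  have hK := Real.cosh_pos (3 * m)
  have hsup : |G.eval x₀| ^ p ≤ 16 * m ^ 2 * n ^ 2 * 2 ^ p * I := by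
    have : 1 / 2 * |G.eval x₀| ^ p ≤ (1 - 1 / (n : ℝ) ^ 2) * |G.eval x₀| ^ p := by
      gcongr
      linarith
    push_cast at hnikolskii
    linarith
  calc |G.eval 0| ^ p ≤ (|G.eval x₀| * Real.cosh (3 * m)) ^ p := by gcongr
    _ = |G.eval x₀| ^ p * Real.cosh (3 * m) ^ p := Real.mul_rpow (abs_nonneg _) hK.le
    _ ≤ 16 * m ^ 2 * n ^ 2 * 2 ^ p * I * Real.cosh (3 * m) ^ p := by gcongr
    _ = _ := by
      rw [Real.mul_rpow zero_le_two hK.le]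
      ring

end Lp

section Kernel

/-- The polynomial `(1 - T_n(1 - 2 t)) / (2 n ^ 2 t)`, normalised to be `1` at the origin and
decaying like `1 / (n ^ 2 t)` on `(0, 1]`. -/
noncomputable def originKernel (n : ℕ) : ℝ[X] :=
  C (2 * (n : ℝ) ^ 2)⁻¹ * divX (1 - (Chebyshev.T ℝ n).comp (1 - C 2 * X))

theorem X_mul_originKernel (n : ℕ) :
    X * originKernel n =
      C (2 * (n : ℝ) ^ 2)⁻¹ * (1 - (Chebyshev.T ℝ n).comp (1 - C 2 * X)) := by
  have hzero : (1 - (Chebyshev.T ℝ n).comp (1 - C 2 * X)).coeff 0 = 0 := by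
    simp [coeff_zero_eq_eval_zero]
  have hdiv := X_mul_divX_add (1 - (Chebyshev.T ℝ n).comp (1 - C 2 * X))
  rw [hzero, C_0, add_zero] at hdiv
  rw [originKernel, mul_left_comm, hdiv]

theorem natDegree_originKernel_le (n : ℕ) : (originKernel n).natDegree ≤ n := by
  have hlin : (1 - C 2 * X : ℝ[X]).natDegree ≤ 1 := by compute_degree
  have hcomp : ((Chebyshev.T ℝ n).comp (1 - C 2 * X)).natDegree ≤ n := by
    refine natDegree_comp_le.trans ?_
    rw [Chebyshev.natDegree_T, Int.natAbs_natCast]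
    exact mul_le_of_le_one_right n.zero_le hlin
  refine (natDegree_C_mul_le _ _).trans (natDegree_divX_le.trans ?_)
  exact (natDegree_sub_le _ _).trans (max_le (by simp) hcomp)

theorem eval_zero_originKernel {n : ℕ} (hn : n ≠ 0) : (originKernel n).eval 0 = 1 := by
  have hderiv : (originKernel n).eval 0 = (2 * (n : ℝ) ^ 2)⁻¹ * (2 * n ^ 2) := by
    simpa [derivative_comp, Chebyshev.derivative_T_eval_one] using
      congrArg (fun F : ℝ[X] => (derivative F).eval 0) (X_mul_originKernel n)
  rw [hderiv, inv_mul_cancel₀ (by positivity)]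

theorem abs_eval_originKernel_le (n : ℕ) {t : ℝ} (ht : t ∈ Ioc 0 1) :
    |(originKernel n).eval t| ≤ ((n : ℝ) ^ 2 * t)⁻¹ := by
  have h := congrArg (fun F : ℝ[X] => |F.eval t|) (X_mul_originKernel n)
  have hT : |(Chebyshev.T ℝ n).eval (1 - 2 * t)| ≤ 1 :=
    Chebyshev.abs_eval_T_real_le_one n (abs_le.2 ⟨by linarith [ht.2], by linarith [ht.1]⟩)
  have htwo : |1 - (Chebyshev.T ℝ n).eval (1 - 2 * t)| ≤ 2 := by
    rw [abs_le] at hT ⊢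
    constructor <;> linarith
  simp only [eval_mul, eval_X, eval_C, eval_sub, eval_one, eval_comp, abs_mul, abs_of_pos ht.1,
    abs_of_nonneg (by positivity : 0 ≤ (2 * (n : ℝ) ^ 2)⁻¹)] at h
  rw [mul_inv, ← div_eq_mul_inv, le_div_iff₀' ht.1, h]
  calc (2 * (n : ℝ) ^ 2)⁻¹ * |1 - (Chebyshev.T ℝ n).eval (1 - 2 * t)|
      ≤ (2 * (n : ℝ) ^ 2)⁻¹ * 2 := by gcongr
    _ = ((n : ℝ) ^ 2)⁻¹ := by
      rw [mul_inv]
      ring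

theorem natDegree_mul_originKernel_pow_le {n k : ℕ} {P : ℝ[X]} (hP : P.natDegree ≤ n) :
    (P * originKernel n ^ k).natDegree ≤ (k + 1) * n :=
  calc (P * originKernel n ^ k).natDegree ≤ n + k * n :=
        natDegree_mul_le_of_le hP (natDegree_pow_le_of_le k (natDegree_originKernel_le n))
    _ = (k + 1) * n := by ring

theorem abs_eval_mul_originKernel_pow_rpow_le {n k : ℕ} (hn : n ≠ 0) (P : ℝ[X]) {α p : ℝ}
    (hp : 0 ≤ p) (hk : -α ≤ k * p) {t : ℝ} (ht : t ∈ Icc (1 / (n : ℝ) ^ 2) 1) :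
    |(P * originKernel n ^ k).eval t| ^ p ≤ (n : ℝ) ^ (2 * α) * (t ^ α * |P.eval t| ^ p) := by
  have hn0 : (0 : ℝ) < n := by positivity
  have ht0 : 0 < t := (by positivity : 0 < 1 / (n : ℝ) ^ 2).trans_le ht.1
  have hu : 1 ≤ (n : ℝ) ^ 2 * t := (div_le_iff₀' (by positivity)).1 ht.1
  have hkernel : (|(originKernel n).eval t| ^ k) ^ p ≤ ((n : ℝ) ^ 2 * t) ^ α := calc
    (|(originKernel n).eval t| ^ k) ^ p = |(originKernel n).eval t| ^ (k * p) := by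
      rw [Real.rpow_mul (abs_nonneg _), Real.rpow_natCast]
    _ ≤ ((n : ℝ) ^ 2 * t)⁻¹ ^ (k * p) := by
      gcongr
      exact abs_eval_originKernel_le n ⟨ht0, ht.2⟩
    _ = ((n : ℝ) ^ 2 * t) ^ (-(k * p)) := (Real.rpow_neg_eq_inv_rpow _ _).symm
    _ ≤ ((n : ℝ) ^ 2 * t) ^ α := Real.rpow_le_rpow_of_exponent_le hu (by linarith)
  calc |(P * originKernel n ^ k).eval t| ^ p
      = |P.eval t| ^ p * (|(originKernel n).eval t| ^ k) ^ p := by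
        rw [eval_mul, eval_pow, abs_mul, abs_pow, Real.mul_rpow (by positivity) (by positivity)]
    _ ≤ |P.eval t| ^ p * ((n : ℝ) ^ 2 * t) ^ α := by gcongr
    _ = (n : ℝ) ^ (2 * α) * (t ^ α * |P.eval t| ^ p) := by
        rw [Real.mul_rpow (by positivity) ht0.le, ← Real.rpow_natCast_mul hn0.le, Nat.cast_ofNat]
        ring

end Kernel

section Weight

theorem one_div_natCast_sq_le_one (n : ℕ) : 1 / (n : ℝ) ^ 2 ≤ 1 := by
  rw [one_div]
  exact_mod_cast Nat.cast_inv_le_one (n ^ 2)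

theorem intervalIntegrable_rpow_mul_abs_eval_rpow {α p a b : ℝ} (P : ℝ[X]) (hp : 0 ≤ p)
    (h : -1 < α ∨ (0 : ℝ) ∉ uIcc a b) :
    IntervalIntegrable (fun t => t ^ α * |P.eval t| ^ p) volume a b := by
  have hweight : IntervalIntegrable (fun t : ℝ => t ^ α) volume a b :=
    h.elim intervalIntegral.intervalIntegrable_rpow' fun h0 =>
      intervalIntegral.intervalIntegrable_rpow (.inr h0)
  exact hweight.mul_continuousOn (continuous_abs_eval_rpow P hp).continuousOn

theorem integral_abs_eval_mul_originKernel_pow_rpow_le {n k : ℕ} (hn : n ≠ 0) (P : ℝ[X])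
    {α p : ℝ} (hp : 0 ≤ p) (hk : -α ≤ k * p) :
    ∫ t in (1 / (n : ℝ) ^ 2)..1, |(P * originKernel n ^ k).eval t| ^ p ≤
      (n : ℝ) ^ (2 * α) * ∫ t in (1 / (n : ℝ) ^ 2)..1, t ^ α * |P.eval t| ^ p := by
  have hδ0 : 0 < 1 / (n : ℝ) ^ 2 := by positivity
  have h0 : (0 : ℝ) ∉ uIcc (1 / (n : ℝ) ^ 2) 1 := notMem_uIcc_of_lt hδ0 one_pos
  rw [← intervalIntegral.integral_const_mul]
  exact intervalIntegral.integral_mono_on (one_div_natCast_sq_le_one n)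
    ((continuous_abs_eval_rpow _ hp).intervalIntegrable _ _)
    ((intervalIntegrable_rpow_mul_abs_eval_rpow P hp (.inr h0)).const_mul _)
    fun t ht => abs_eval_mul_originKernel_pow_rpow_le hn P hp hk ht

theorem integral_rpow_mul_abs_eval_rpow_le_of_le {α p a b : ℝ} (hα : -1 < α) (hp : 0 ≤ p)
    (P : ℝ[X]) (ha : 0 ≤ a) (hab : a ≤ b) :
    ∫ t in a..b, t ^ α * |P.eval t| ^ p ≤ ∫ t in (0 : ℝ)..b, t ^ α * |P.eval t| ^ p := by
  refine intervalIntegral.integral_mono_interval ha hab le_rfl ?_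
    (intervalIntegrable_rpow_mul_abs_eval_rpow P hp (.inl hα))
  filter_upwards [ae_restrict_mem measurableSet_Ioc] with t ht
  exact mul_nonneg (Real.rpow_nonneg ht.1.le α) (Real.rpow_nonneg (abs_nonneg _) p)

end Weight

theorem stmt_12_general (α : ℝ) (p : ℝ) (hp : 0 < p) :
    ∃ c : ℝ, 0 < c ∧ ∀ n : ℕ, 2 ≤ n → ∀ P : Polynomial ℝ, P.natDegree ≤ n →
      c * |P.eval 0| ^ p * (n : ℝ) ^ (-(2 + 2 * α)) ≤
        ∫ t in (1 / (n : ℝ) ^ 2)..1, t ^ α * |P.eval t| ^ p := by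
  obtain ⟨k, hk⟩ := exists_nat_ge (-α / p)
  rw [div_le_iff₀ hp] at hk
  set K : ℝ := 16 * (k + 1 : ℕ) ^ 2 * (2 * Real.cosh (3 * (k + 1 : ℕ))) ^ p
  have hK : 0 < K := by
    have := Real.cosh_pos (3 * (k + 1 : ℕ))
    positivity
  refine ⟨K⁻¹, inv_pos.2 hK, fun n hn P hP => ?_⟩
  have hn0 : (0 : ℝ) < n := by positivity
  set I := ∫ t in (1 / (n : ℝ) ^ 2)..1, t ^ α * |P.eval t| ^ p
  have hbound : |P.eval 0| ^ p ≤ K * (n : ℝ) ^ (2 + 2 * α) * I := calc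
    |P.eval 0| ^ p = |(P * originKernel n ^ k).eval 0| ^ p := by
      simp [eval_zero_originKernel (by positivity : n ≠ 0)]
    _ ≤ K * n ^ 2 * ∫ t in (1 / (n : ℝ) ^ 2)..1, |(P * originKernel n ^ k).eval t| ^ p :=
      abs_eval_zero_rpow_le_integral hn k.succ_ne_zero (natDegree_mul_originKernel_pow_le hP) hp
    _ ≤ K * n ^ 2 * ((n : ℝ) ^ (2 * α) * I) := by
      gcongr
      exact integral_abs_eval_mul_originKernel_pow_rpow_le (by positivity) P hp.le hk
    _ = K * (n : ℝ) ^ (2 + 2 * α) * I := by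
      rw [Real.rpow_add hn0, Real.rpow_two]
      ring
  rw [Real.rpow_neg hn0.le, ← div_eq_mul_inv, div_le_iff₀ (by positivity), inv_mul_le_iff₀ hK]
  linarith

theorem stmt_12 (α : ℝ) (hα : -1 < α) (p : ℝ) (hp : 1 ≤ p) :
    ∃ c : ℝ, 0 < c ∧ ∀ n : ℕ, 2 ≤ n → ∀ P : Polynomial ℝ, P.natDegree ≤ n →
      c * |P.eval 0| ^ p * (n : ℝ) ^ (-(2 + 2 * α)) ≤
        ∫ t in (0 : ℝ)..1, t ^ α * |P.eval t| ^ p := by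
  obtain ⟨c, hc, h⟩ := stmt_12_general α p (by positivity)
  exact ⟨c, hc, fun n hn P hP => (h n hn P hP).trans <|
    integral_rpow_mul_abs_eval_rpow_le_of_le hα (by positivity) P (by positivity)
      (one_div_natCast_sq_le_one n)⟩
end

section
/- (Remez inequality) Let h ∈ (0,2) and let p be a real polynomial of degree at most n such that the Lebesgue measure of {x ∈ [−1,1] : |p(x)| ≤ 1} is at least 2 − h. Then max_{[−1,1]} |p(x)| ≤ Cₙ((2+h)/(2−h)), where Cₙ is the Chebyshev polynomial of degree n for [−1,1]. -/
/-!
Expand `p` by Lagrange interpolation at points `y₀, …, yₙ`. At the extremal points of `Tₙ` the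
interpolation formula for `Tₙ` has only nonnegative terms to the right of `1`, so `|p x|` is
dominated by `Tₙ X` as soon as the `yᵢ` are, up to scale, at least as far apart as those extremal
points and at least as close to `x` as those are to `X`. Such `yᵢ` exist in any compact set `F` to
the left of `x`: squeezing the gaps out of `F` is a `1`-Lipschitz map onto an interval of length
`|F|`, and one pulls back the extremal points, rescaled to that interval. On one of the two sides
of `x` the given set has at least its average density, and that side suffices.
-/

section LagrangeComparison

open Polynomial Polynomial.Chebyshev Finset

theorem eval_eq_sum_mul_prod_div {ι K : Type*} [DecidableEq ι] [Field K] {s : Finset ι}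
    {v : ι → K} (hv : Set.InjOn v s) {p : K[X]} (hp : p.degree < #s) (x : K) :
    p.eval x = ∑ i ∈ s, p.eval (v i) * ∏ j ∈ s.erase i, (x - v j) / (v i - v j) := by
  conv_lhs => rw [Lagrange.eq_interpolate hv hp]
  simp only [Lagrange.interpolate_apply, eval_finsetSum, eval_mul, eval_C, Lagrange.basis,
    eval_prod, Lagrange.basisDivisor, eval_sub, eval_X, div_eq_inv_mul]

theorem degree_lt_card_range {R : Type*} [Semiring R] {n : ℕ} {p : R[X]} (hp : p.natDegree ≤ n) :
    p.degree < #(range (n + 1)) := by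
  rw [card_range]
  exact degree_le_natDegree.trans_lt (mod_cast Nat.lt_succ_of_le hp)

theorem prod_abs_node_sub_node {n i : ℕ} (hi : i ≤ n) :
    ∏ j ∈ (range (n + 1)).erase i, |node n i - node n j| =
      (-1) ^ i * ∏ j ∈ (range (n + 1)).erase i, (node n i - node n j) := by
  rw [← abs_prod, ← abs_of_pos (zero_lt_prod_node_sub_node hi), abs_mul, abs_neg_one_pow, one_mul]

theorem eval_T_eq_sum_prod_div_abs (n : ℕ) (x : ℝ) :
    (T ℝ n).eval x = ∑ i ∈ range (n + 1),
      ∏ j ∈ (range (n + 1)).erase i, (x - node n j) / |node n i - node n j| := by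
  have hdeg : (T ℝ n).natDegree ≤ n := by simp [natDegree_T]
  rw [eval_eq_sum_mul_prod_div (strictAntiOn_node n).injOn (degree_lt_card_range hdeg)]
  refine sum_congr rfl fun i hi => ?_
  have hin : i ≤ n := mem_range_succ_iff.1 hi
  rw [eval_T_real_node (mem_Iic.2 hin), prod_div_distrib, prod_div_distrib,
    prod_abs_node_sub_node hin]
  rcases neg_one_pow_eq_or ℝ i with hsign | hsign <;> simp [hsign, div_neg]

theorem abs_eval_le_mul_eval_T_of_node_dist {n : ℕ} {p : ℝ[X]} (hp : p.natDegree ≤ n)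
    {y : ℕ → ℝ} {x X r M : ℝ} (hr : 0 < r)
    (hsep : ∀ i ∈ range (n + 1), ∀ j ∈ range (n + 1),
      r * |node n i - node n j| ≤ |y i - y j|)
    (hdist : ∀ i ∈ range (n + 1), |x - y i| ≤ r * (X - node n i))
    (hM : ∀ i ∈ range (n + 1), |p.eval (y i)| ≤ M) :
    |p.eval x| ≤ M * (T ℝ n).eval X := by
  have hnode : ∀ i ∈ range (n + 1), ∀ j ∈ range (n + 1), i ≠ j →
      0 < r * |node n i - node n j| := fun i hi j hj hij =>
    mul_pos hr (abs_pos.2 (sub_ne_zero.2 ((strictAntiOn_node n).injOn.ne hi hj hij)))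
  have hinj : Set.InjOn y (range (n + 1)) := fun i hi j hj hij => by
    by_contra hne
    have := (hnode i hi j hj hne).trans_le (hsep i hi j hj)
    simp [hij] at this
  have hfactor : ∀ i ∈ range (n + 1), ∀ j ∈ (range (n + 1)).erase i,
      |(x - y j) / (y i - y j)| ≤ (X - node n j) / |node n i - node n j| := by
    intro i hi j hj
    obtain ⟨hji, hj⟩ := mem_erase.1 hj
    rw [abs_div, ← mul_div_mul_left (X - node n j) _ hr.ne']
    exact div_le_div₀ ((abs_nonneg _).trans (hdist j hj)) (hdist j hj)
      (hnode i hi j hj hji.symm) (hsep i hi j hj)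
  rw [eval_eq_sum_mul_prod_div hinj (degree_lt_card_range hp), eval_T_eq_sum_prod_div_abs, mul_sum]
  refine (abs_sum_le_sum_abs _ _).trans (sum_le_sum fun i hi => ?_)
  rw [abs_mul, abs_prod]
  exact mul_le_mul (hM i hi) (prod_le_prod (fun _ _ => abs_nonneg _) (hfactor i hi))
    (prod_nonneg fun _ _ => abs_nonneg _) ((abs_nonneg _).trans (hM i hi))

end LagrangeComparison

section VolumeBelow

open MeasureTheory Set

/-- The distribution function `y ↦ |F ∩ (-∞, y]|` of Lebesgue measure on `F`, which squeezes out
the gaps of `F`. It is real-valued, so it carries information only where `F ∩ (-∞, y]` has finite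
measure. -/
noncomputable def volumeBelow (F : Set ℝ) (y : ℝ) : ℝ :=
  volume.real (F ∩ Iic y)

variable {F : Set ℝ}

theorem volumeBelow_le_add_of_le (hF : volume F ≠ ⊤) {y z : ℝ} (hyz : y ≤ z) :
    volumeBelow F z ≤ volumeBelow F y + (z - y) := by
  have hcover : F ∩ Iic z ⊆ F ∩ Iic y ∪ Icc y z := fun w hw =>
    (le_total w y).imp (fun h => ⟨hw.1, h⟩) fun h => ⟨h, hw.2⟩
  have hfin : volume (F ∩ Iic y ∪ Icc y z) ≠ ⊤ :=
    measure_union_ne_top (measure_ne_top_of_subset inter_subset_left hF)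
      isCompact_Icc.measure_ne_top
  calc volumeBelow F z ≤ volume.real (F ∩ Iic y ∪ Icc y z) := measureReal_mono hcover hfin
    _ ≤ volumeBelow F y + volume.real (Icc y z) := measureReal_union_le _ _
    _ = volumeBelow F y + (z - y) := by rw [Real.volume_real_Icc_of_le hyz]

theorem volumeBelow_mono (hF : volume F ≠ ⊤) : Monotone (volumeBelow F) := fun _ z hyz =>
  measureReal_mono (inter_subset_inter_right F (Iic_subset_Iic.2 hyz))
    (measure_ne_top_of_subset (inter_subset_left (t := Iic z)) hF)

theorem lipschitzWith_one_volumeBelow (hF : volume F ≠ ⊤) : LipschitzWith 1 (volumeBelow F) := by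
  refine LipschitzWith.of_le_add fun y z => ?_
  rcases le_total y z with hyz | hzy
  · exact (volumeBelow_mono hF hyz).trans (le_add_of_nonneg_right dist_nonneg)
  · rw [Real.dist_eq, abs_of_nonneg (sub_nonneg.2 hzy)]
    exact volumeBelow_le_add_of_le hF hzy

theorem volumeBelow_eq_zero_of_mem_lowerBounds {a : ℝ} (ha : a ∈ lowerBounds F) :
    volumeBelow F a = 0 := by
  have hsub : F ∩ Iic a ⊆ {a} := fun _ hy => le_antisymm hy.2 (ha hy.1)
  simp [volumeBelow, Measure.real, measure_mono_null hsub]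

theorem volumeBelow_eq_of_mem_upperBounds {b : ℝ} (hb : b ∈ upperBounds F) :
    volumeBelow F b = volume.real F :=
  congrArg volume.real (inter_eq_left.2 fun _ hy => hb hy)

theorem exists_mem_volumeBelow_eq (hF : IsCompact F) (hne : F.Nonempty) {t : ℝ}
    (ht : t ∈ Icc 0 (volume.real F)) : ∃ y ∈ F, volumeBelow F y = t := by
  obtain ⟨a, haF, ha⟩ := hF.exists_isLeast hne
  obtain ⟨b, hbF, hb⟩ := hF.exists_isGreatest hne
  rw [← volumeBelow_eq_zero_of_mem_lowerBounds ha, ← volumeBelow_eq_of_mem_upperBounds hb] at ht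
  obtain ⟨z, hz, rfl⟩ := intermediate_value_Icc (ha hbF)
    (lipschitzWith_one_volumeBelow hF.measure_ne_top).continuous.continuousOn ht
  obtain ⟨y, ⟨hyF, hyz⟩, hy⟩ := (hF.inter_right isClosed_Iic).exists_isGreatest
    (⟨a, haF, hz.1⟩ : (F ∩ Iic z).Nonempty)
  have heq : F ∩ Iic y = F ∩ Iic z :=
    Subset.antisymm (inter_subset_inter_right F (Iic_subset_Iic.2 hyz))
      fun w hw => ⟨hw.1, hy hw⟩
  exact ⟨y, hyF, congrArg volume.real heq⟩

end VolumeBelow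

section Remez

open MeasureTheory Polynomial Polynomial.Chebyshev Set

variable {n : ℕ} {p : ℝ[X]} {F : Set ℝ} {M x X : ℝ}

theorem abs_eval_right_le_mul_eval_T (hp : p.natDegree ≤ n) (hF : IsCompact F) {a : ℝ}
    (hFax : F ⊆ Icc a x) (hpos : 0 < volume.real F)
    (hX : 2 * (x - a) ≤ (X + 1) * volume.real F) (hM : ∀ y ∈ F, |p.eval y| ≤ M) :
    |p.eval x| ≤ M * (T ℝ n).eval X := by
  set m := volume.real F
  have hlip := lipschitzWith_one_volumeBelow hF.measure_ne_top
  have hne : F.Nonempty := nonempty_of_measureReal_ne_zero hpos.ne'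
  have hnode (i : ℕ) : m / 2 * (1 + node n i) ∈ Icc 0 m := by
    obtain ⟨hlow, hupp⟩ := node_mem_Icc (n := n) (i := i)
    constructor <;> nlinarith
  choose y hyF hy using fun i => exists_mem_volumeBelow_eq hF hne (hnode i)
  refine abs_eval_le_mul_eval_T_of_node_dist hp (half_pos hpos) (fun i _ j _ => ?_)
    (fun i _ => ?_) fun i _ => hM _ (hyF i)
  · calc m / 2 * |node n i - node n j| = |volumeBelow F (y i) - volumeBelow F (y j)| := by
          rw [hy, hy, ← mul_sub, add_sub_add_left_eq_sub, abs_mul, abs_of_pos (half_pos hpos)]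
      _ ≤ |y i - y j| := by simpa [Real.dist_eq] using hlip.dist_le_mul (y i) (y j)
  · obtain ⟨hay, hyx⟩ := hFax (hyF i)
    have hya : m / 2 * (1 + node n i) ≤ y i - a := by
      have := volumeBelow_le_add_of_le hF.measure_ne_top hay
      rwa [hy, volumeBelow_eq_zero_of_mem_lowerBounds fun z hz => (hFax hz).1, zero_add] at this
    rw [abs_of_nonneg (sub_nonneg.2 hyx)]
    linarith

theorem abs_eval_left_le_mul_eval_T (hp : p.natDegree ≤ n) (hF : IsCompact F) {b : ℝ}
    (hFxb : F ⊆ Icc x b) (hpos : 0 < volume.real F)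
    (hX : 2 * (b - x) ≤ (X + 1) * volume.real F) (hM : ∀ y ∈ F, |p.eval y| ≤ M) :
    |p.eval x| ≤ M * (T ℝ n).eval X := by
  have hvol : volume.real (-F) = volume.real F := by simp [Measure.real]
  have hdeg : (p.comp (-Polynomial.X)).natDegree ≤ n := by simpa [natDegree_comp] using hp
  have hsub : -F ⊆ Icc (-b) (-x) := by
    rw [← neg_Icc]
    exact neg_subset_neg.2 hFxb
  have hrefl := abs_eval_right_le_mul_eval_T (M := M) (X := X) hdeg hF.neg hsub
    (hvol.symm ▸ hpos) (by rw [hvol]; linarith) fun y hy => by simpa using hM (-y) hy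
  simpa using hrefl

theorem pos_and_le_mul_or_of_add_le_mul_add {u v k A B : ℝ} (hu : 0 ≤ u) (hv : 0 ≤ v) (hA : 0 ≤ A)
    (hB : 0 ≤ B) (hAB : 0 < A + B) (h : u + v ≤ k * (A + B)) :
    0 < A ∧ u ≤ k * A ∨ 0 < B ∧ v ≤ k * B := by
  rcases hA.eq_or_lt with rfl | hA
  · exact Or.inr ⟨by linarith, by linarith⟩
  rcases hB.eq_or_lt with rfl | hB
  · exact Or.inl ⟨hA, by linarith⟩
  · by_cases hle : u ≤ k * A
    · exact Or.inl ⟨hA, hle⟩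
    · exact Or.inr ⟨hB, by linarith⟩

theorem abs_eval_le_of_mem_closure {E : Set ℝ} (hM : ∀ y ∈ E, |p.eval y| ≤ M) {y : ℝ}
    (hy : y ∈ closure E) : |p.eval y| ≤ M :=
  closure_minimal hM (isClosed_le p.continuous.abs continuous_const) hy

theorem stmt_17_general {a b s : ℝ} {E : Set ℝ} (hp : p.natDegree ≤ n) (hEab : E ⊆ Icc a b)
    (hs : 0 < s) (hsE : ENNReal.ofReal s ≤ volume E) (hM : ∀ y ∈ E, |p.eval y| ≤ M)
    (hx : x ∈ Icc a b) :
    |p.eval x| ≤ M * (T ℝ n).eval (2 * (b - a) / s - 1) := by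
  set K := closure E
  have hKab : K ⊆ Icc a b := closure_minimal hEab isClosed_Icc
  have hK : IsCompact K := isCompact_Icc.of_isClosed_subset isClosed_closure hKab
  have hMK (y : ℝ) (hy : y ∈ K) : |p.eval y| ≤ M := abs_eval_le_of_mem_closure hM hy
  have hsplit : s ≤ volume.real (K ∩ Iic x) + volume.real (K ∩ Ici x) := by
    have hsK : s ≤ volume.real K := (ENNReal.ofReal_le_iff_le_toReal hK.measure_ne_top).1
      (hsE.trans (measure_mono subset_closure))
    have hKx : K ∩ Iic x ∪ K ∩ Ici x = K := by
      rw [← inter_union_distrib_left, Iic_union_Ici, inter_univ]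
    calc s ≤ volume.real (K ∩ Iic x ∪ K ∩ Ici x) := by rwa [hKx]
      _ ≤ _ := measureReal_union_le _ _
  have hratio : 2 * (b - a) / s - 1 + 1 = 2 * ((b - a) / s) := by ring
  have hdensity : (x - a) + (b - x) ≤
      (b - a) / s * (volume.real (K ∩ Iic x) + volume.real (K ∩ Ici x)) := by
    rw [div_mul_eq_mul_div, le_div_iff₀ hs]
    linarith [mul_le_mul_of_nonneg_left hsplit (sub_nonneg.2 (hx.1.trans hx.2))]
  rcases pos_and_le_mul_or_of_add_le_mul_add (sub_nonneg.2 hx.1) (sub_nonneg.2 hx.2)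
    measureReal_nonneg measureReal_nonneg (hs.trans_le hsplit) hdensity with
    ⟨hpos, hle⟩ | ⟨hpos, hle⟩
  · refine abs_eval_right_le_mul_eval_T hp (hK.inter_right isClosed_Iic)
      (fun y hy => ⟨(hKab hy.1).1, hy.2⟩) hpos ?_ fun y hy => hMK y hy.1
    rwa [hratio, mul_assoc, mul_le_mul_iff_right₀ two_pos]
  · refine abs_eval_left_le_mul_eval_T hp (hK.inter_right isClosed_Ici)
      (fun y hy => ⟨hy.2, (hKab hy.1).2⟩) hpos ?_ fun y hy => hMK y hy.1
    rwa [hratio, mul_assoc, mul_le_mul_iff_right₀ two_pos]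

end Remez

theorem stmt_17 (h : ℝ) (hh : h ∈ Set.Ioo (0 : ℝ) 2) (n : ℕ) (p : Polynomial ℝ)
    (hdeg : p.natDegree ≤ n)
    (hmeas : ENNReal.ofReal (2 - h) ≤
      MeasureTheory.volume {x ∈ Set.Icc (-1 : ℝ) 1 | |p.eval x| ≤ 1}) :
    ∀ x ∈ Set.Icc (-1 : ℝ) 1,
      |p.eval x| ≤ (Polynomial.Chebyshev.T ℝ n).eval ((2 + h) / (2 - h)) := by
  intro x hx
  have hs : 0 < 2 - h := sub_pos.2 hh.2
  have hX : 2 * (1 - -1) / (2 - h) - 1 = (2 + h) / (2 - h) := by field_simp; ring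
  simpa only [hX, one_mul] using
    stmt_17_general hdeg (Set.sep_subset _ _) hs hmeas (fun _ hy => hy.2) hx
end

section
/- Let α ≥ 0 and m ∈ ℕ. Then min over polynomials pₙ of degree ≤ n of max_{t ∈ [0,1]} t^α |1 − t^m pₙ(t)| is bounded below by c(α,m)·n^{−2α} and above by C(α,m)·n^{−2α}, i.e. it is asymptotically of order n^{−2α} as n → ∞. -/
/-!
Lower bound: `f = 1 - X ^ m * p` has degree at most `N = n + m` and `f 0 = 1`. The affine image of
`T_N` on `[a, 1]`, where `a = tanh (1 / N) ^ 2`, takes the value `cosh 2` at `0`, so by the extremal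
growth of Chebyshev polynomials `|f| ≥ 1 / cosh 2` somewhere on `[a, 1]`; there `t ^ α ≥ a ^ α`,
which is of order `n ^ (-2α)`.

Upper bound: the Fejér polynomial `K (sin² φ) = (sin (k φ) / (k sin φ))²` satisfies `K 0 = 1`,
`0 ≤ K ≤ 1` and `t * K t ≤ 1 / k ^ 2` on `[0, 1]`. For a natural number `s ≥ α`, the polynomial
`(1 - K ^ s) ^ m` is divisible by `X ^ m`, and Bernoulli's inequality gives
`t ^ α * (1 - (1 - K ^ s) ^ m) ≤ m * t ^ α * K ^ s ≤ m * (t * K) ^ α ≤ m * k ^ (-2α)`.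
-/

section

open Polynomial Polynomial.Chebyshev Set

theorem rpow_neg_two_mul {x : ℝ} (hx : 0 ≤ x) (α : ℝ) : x ^ (-(2 * α)) = (1 / x ^ 2) ^ α := by
  rw [Real.rpow_neg hx, Real.rpow_mul hx, Real.rpow_two, one_div,
    Real.inv_rpow (by positivity)]

theorem div_cosh_le_tanh {x y : ℝ} (hx : 0 ≤ x) (hxy : x ≤ y) :
    x / Real.cosh y ≤ Real.tanh x := by
  have hcosh : Real.cosh x ≤ Real.cosh y := by
    rwa [Real.cosh_le_cosh, abs_of_nonneg hx, abs_of_nonneg (hx.trans hxy)]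
  rw [Real.tanh_eq_sinh_div_cosh]
  exact div_le_div₀ (Real.sinh_nonneg_iff.2 hx) (Real.self_le_sinh_iff.2 hx)
    (Real.cosh_pos x) hcosh

theorem tanh_sq_lt_one (x : ℝ) : Real.tanh x ^ 2 < 1 :=
  (sq_lt_one_iff_abs_lt_one _).2 (abs_lt.2 ⟨Real.neg_one_lt_tanh x, Real.tanh_lt_one x⟩)

theorem cosh_two_mul_eq_div (x : ℝ) :
    Real.cosh (2 * x) = (1 + Real.tanh x ^ 2) / (1 - Real.tanh x ^ 2) := by
  have hcosh : Real.cosh x ≠ 0 := (Real.cosh_pos x).ne'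
  rw [eq_div_iff (sub_pos.2 (tanh_sq_lt_one x)).ne', Real.cosh_two_mul,
    Real.tanh_eq_sinh_div_cosh]
  field_simp
  linear_combination Real.cosh_sq_sub_sinh_sq x

theorem abs_one_sub_one_sub_pow_le {x : ℝ} (hx : x ∈ Icc (0 : ℝ) 1) (m : ℕ) :
    |1 - (1 - x) ^ m| ≤ m * x := by
  obtain ⟨hx0, hx1⟩ := hx
  have bernoulli := one_add_mul_le_pow (a := -x) (by linarith) m
  have hpow : (1 - x) ^ m ≤ 1 := pow_le_one₀ (by linarith) (by linarith)
  rw [← sub_eq_add_neg] at bernoulli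
  rw [abs_of_nonneg (by linarith)]
  linarith

theorem exists_X_pow_mul_eq_one_sub_pow {R : Type*} [CommRing R] {Q : R[X]} (hQ : Q.coeff 0 = 1)
    (m : ℕ) : ∃ p : R[X], p.natDegree ≤ m * Q.natDegree ∧ X ^ m * p = (1 - Q) ^ m := by
  refine ⟨(-Q.divX) ^ m, ?_, ?_⟩
  · refine natDegree_pow_le.trans (Nat.mul_le_mul_left m ?_)
    rw [natDegree_neg]
    exact natDegree_divX_le
  · have hX : X * Q.divX + 1 = Q := by simpa [hQ] using X_mul_divX_add Q
    rw [← mul_pow]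
    congr 1
    linear_combination -hX

theorem eval_le_mul_eval_T_of_forall_abs_le {f : ℝ[X]} {N : ℕ} (hf : f.natDegree ≤ N)
    {a b M x : ℝ} (hab : a < b) (hM : ∀ t ∈ Icc a b, |f.eval t| ≤ M) (hx : x ≤ a) :
    f.eval x ≤ M * (T ℝ N).eval ((a + b - 2 * x) / (b - a)) := by
  have hba : 0 < b - a := sub_pos.2 hab
  rcases ((abs_nonneg _).trans (hM a (left_mem_Icc.2 hab.le))).eq_or_lt with rfl | hM0
  · have hf0 : f = 0 := eq_zero_of_infinite_isRoot f <|
      (Icc_infinite hab).mono fun t ht => abs_nonpos_iff.1 (hM t ht)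
    simp [hf0]
  set L : ℝ[X] := C ((a + b) / 2) - C ((b - a) / 2) * X with hL
  have eval_L (y : ℝ) : L.eval y = (a + b) / 2 - (b - a) / 2 * y := by simp [hL]
  have natDegree_L : L.natDegree ≤ 1 := by rw [hL]; compute_degree
  have hdeg : (C M⁻¹ * f.comp L).degree ≤ N := by
    refine degree_le_of_natDegree_le <|
      (natDegree_C_mul_le _ _).trans <| natDegree_comp_le.trans ?_
    simpa using Nat.mul_le_mul hf natDegree_L
  have hbound : ∀ y ∈ Icc (-1 : ℝ) 1, |(C M⁻¹ * f.comp L).eval y| ≤ 1 := by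
    rintro y ⟨hy, hy'⟩
    have hLy : L.eval y ∈ Icc a b := by rw [eval_L]; constructor <;> nlinarith
    rw [eval_C_mul, eval_comp, abs_mul, abs_of_pos (inv_pos.2 hM0), inv_mul_le_one₀ hM0]
    exact hM _ hLy
  have hx1 : 1 ≤ (a + b - 2 * x) / (b - a) := by rw [one_le_div hba]; linarith
  have hLx : L.eval ((a + b - 2 * x) / (b - a)) = x := by
    rw [eval_L]; field_simp; ring
  have hgrowth := eval_iterate_derivative_le_of_forall_abs_le_one (k := 0) hx1 hdeg hbound
  rwa [Function.iterate_zero_apply, Function.iterate_zero_apply, eval_C_mul, eval_comp, hLx,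
    inv_mul_le_iff₀ hM0] at hgrowth

theorem abs_eval_le_mul_eval_T_of_forall_abs_le {f : ℝ[X]} {N : ℕ} (hf : f.natDegree ≤ N)
    {a b M x : ℝ} (hab : a < b) (hM : ∀ t ∈ Icc a b, |f.eval t| ≤ M) (hx : x ≤ a) :
    |f.eval x| ≤ M * (T ℝ N).eval ((a + b - 2 * x) / (b - a)) := by
  refine abs_le'.2 ⟨eval_le_mul_eval_T_of_forall_abs_le hf hab hM hx, ?_⟩
  rw [← eval_neg]
  exact eval_le_mul_eval_T_of_forall_abs_le (by rwa [natDegree_neg]) hab (by simpa using hM) hx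

theorem abs_eval_zero_le_mul_cosh_of_forall_abs_le {f : ℝ[X]} {N : ℕ} (hf : f.natDegree ≤ N)
    {θ M : ℝ} (hM : ∀ t ∈ Icc (Real.tanh θ ^ 2) 1, |f.eval t| ≤ M) :
    |f.eval 0| ≤ M * Real.cosh (N * (2 * θ)) := by
  have hgrowth := abs_eval_le_mul_eval_T_of_forall_abs_le hf (tanh_sq_lt_one θ) hM (sq_nonneg _)
  rw [mul_zero, sub_zero, add_comm _ (1 : ℝ), ← cosh_two_mul_eq_div, T_real_cosh] at hgrowth
  exact_mod_cast hgrowth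

theorem exists_le_rpow_mul_abs_eval {α : ℝ} (hα : 0 ≤ α) {f : ℝ[X]} {N : ℕ} (hN : N ≠ 0)
    (hf : f.natDegree ≤ N) :
    ∃ t ∈ Icc (0 : ℝ) 1,
      (N * Real.cosh 1) ^ (-(2 * α)) * (|f.eval 0| / Real.cosh 2) ≤ t ^ α * |f.eval t| := by
  have hN1 : (1 : ℝ) ≤ N := by exact_mod_cast Nat.one_le_iff_ne_zero.2 hN
  have hN0 : (0 : ℝ) < N := by linarith
  obtain ⟨t, ⟨hat, ht1⟩, hmax⟩ := isCompact_Icc.exists_isMaxOn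
    (nonempty_Icc.2 (tanh_sq_lt_one (1 / N)).le) f.continuous.abs.continuousOn
  refine ⟨t, ⟨(sq_nonneg _).trans hat, ht1⟩, ?_⟩
  have hf0 : |f.eval 0| / Real.cosh 2 ≤ |f.eval t| := by
    rw [div_le_iff₀ (Real.cosh_pos 2)]
    have hgrowth := abs_eval_zero_le_mul_cosh_of_forall_abs_le hf hmax
    rwa [show (N : ℝ) * (2 * (1 / N)) = 2 by field_simp] at hgrowth
  have hta : 1 / (N * Real.cosh 1) ^ 2 ≤ t := by
    refine le_trans ?_ hat
    rw [← one_div_pow, ← div_div]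
    refine pow_le_pow_left₀ (by positivity) (div_cosh_le_tanh (by positivity) ?_) 2
    exact (div_le_one hN0).2 hN1
  rw [rpow_neg_two_mul (by positivity)]
  exact mul_le_mul (Real.rpow_le_rpow (by positivity) hta hα) hf0 (by positivity)
    (Real.rpow_nonneg ((sq_nonneg _).trans hat) α)

theorem exists_le_rpow_mul_abs_one_sub_pow_mul {α : ℝ} (hα : 0 ≤ α) {m n : ℕ} (hm : m ≠ 0)
    (hn : n ≠ 0) {p : ℝ[X]} (hp : p.natDegree ≤ n) :
    ∃ t ∈ Icc (0 : ℝ) 1,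
      ((m + 1) * Real.cosh 1) ^ (-(2 * α)) / Real.cosh 2 * (n : ℝ) ^ (-(2 * α)) ≤
        t ^ α * |1 - t ^ m * p.eval t| := by
  have hdeg : (1 - X ^ m * p).natDegree ≤ n + m := by
    compute_degree
    omega
  obtain ⟨t, ht, hle⟩ := exists_le_rpow_mul_abs_eval hα (by omega) hdeg
  have hscale : ((n + m : ℕ) : ℝ) * Real.cosh 1 ≤ (m + 1) * Real.cosh 1 * n := by
    have hnm : ((n + m : ℕ) : ℝ) ≤ (m + 1) * n := by
      exact_mod_cast (by nlinarith [Nat.pos_of_ne_zero hn] : n + m ≤ (m + 1) * n)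
    linarith [mul_le_mul_of_nonneg_right hnm (Real.cosh_pos 1).le]
  have hpos : (0 : ℝ) < (n + m : ℕ) := by exact_mod_cast (by omega : 0 < n + m)
  refine ⟨t, ht, ?_⟩
  calc ((m + 1) * Real.cosh 1) ^ (-(2 * α)) / Real.cosh 2 * (n : ℝ) ^ (-(2 * α))
      = ((m + 1) * Real.cosh 1 * n) ^ (-(2 * α)) / Real.cosh 2 := by
        rw [div_mul_eq_mul_div, ← Real.mul_rpow (by positivity) (by positivity)]
    _ ≤ (((n + m : ℕ) : ℝ) * Real.cosh 1) ^ (-(2 * α)) / Real.cosh 2 := by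
        gcongr ?_ / _
        exact Real.rpow_le_rpow_of_nonpos (mul_pos hpos (Real.cosh_pos 1)) hscale (by linarith)
    _ ≤ t ^ α * |1 - t ^ m * p.eval t| := by simpa [hm, div_eq_mul_inv] using hle

theorem abs_eval_T_sub_eval_T_le (n : ℤ) {x y : ℝ} (hx : x ∈ Icc (-1 : ℝ) 1)
    (hy : y ∈ Icc (-1 : ℝ) 1) :
    |(T ℝ n).eval y - (T ℝ n).eval x| ≤ (n : ℝ) ^ 2 * |y - x| := by
  refine (convex_Icc (-1 : ℝ) 1).norm_image_sub_le_of_norm_deriv_le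
    (f := fun z => (T ℝ n).eval z) (fun z _ => (T ℝ n).differentiableAt) (fun z hz => ?_) hx hy
  simpa [derivative_T_eval_one] using abs_iterate_derivative_T_real_le n 1 (abs_le.2 hz)

/-- The normalized Fejér kernel `(sin (k φ) / (k sin φ))²` as a polynomial in `t = sin² φ`: a bump
of height `1` and width `1 / k ^ 2` at `0`. It is encoded as `(1 - T_k (1 - 2t)) / (2 k² t)`, using
`1 - cos (2 k φ) = 2 sin² (k φ)`; `divX` performs the division by `t`. For `k = 0` it is `0`. -/
noncomputable def fejerPolynomial (k : ℕ) : ℝ[X] :=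
  C (1 / (2 * (k : ℝ) ^ 2)) * (1 - (T ℝ k).comp (1 - 2 * X)).divX

namespace fejerPolynomial

theorem natDegree_le (k : ℕ) : (fejerPolynomial k).natDegree ≤ k - 1 := by
  refine (natDegree_C_mul_le _ _).trans ?_
  rw [natDegree_divX_eq_natDegree_tsub_one]
  refine Nat.sub_le_sub_right ?_ 1
  have hlin : (1 - 2 * X : ℝ[X]).natDegree ≤ 1 := by compute_degree
  calc (1 - (T ℝ k).comp (1 - 2 * X)).natDegree
      ≤ ((T ℝ k).comp (1 - 2 * X)).natDegree := (natDegree_sub_le _ _).trans (by simp)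
    _ ≤ (T ℝ k).natDegree * (1 - 2 * X : ℝ[X]).natDegree := natDegree_comp_le
    _ ≤ k := by simpa [natDegree_T] using Nat.mul_le_mul_left k hlin

theorem mul_eval (k : ℕ) (t : ℝ) :
    t * (fejerPolynomial k).eval t = (1 - (T ℝ k).eval (1 - 2 * t)) / (2 * (k : ℝ) ^ 2) := by
  have hdivX : t * (1 - (T ℝ k).comp (1 - 2 * X)).divX.eval t =
      1 - (T ℝ k).eval (1 - 2 * t) := by
    have hcoeff : (1 - (T ℝ k).comp (1 - 2 * X)).coeff 0 = 0 := by
      simp [coeff_zero_eq_eval_zero]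
    have hX := X_mul_divX_add (1 - (T ℝ k).comp (1 - 2 * X))
    rw [hcoeff, C_0, add_zero] at hX
    simpa using congrArg (eval t) hX
  rw [fejerPolynomial, eval_C_mul, ← hdivX]
  ring

theorem eval_zero {k : ℕ} (hk : k ≠ 0) : (fejerPolynomial k).eval 0 = 1 := by
  have hk0 : (k : ℝ) ≠ 0 := Nat.cast_ne_zero.2 hk
  have hderiv : (1 - (T ℝ k).comp (1 - 2 * X)).divX.eval 0 = 2 * (k : ℝ) ^ 2 := by
    calc (1 - (T ℝ k).comp (1 - 2 * X)).divX.eval 0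
        = (derivative (1 - (T ℝ k).comp (1 - 2 * X))).eval 0 := by
          simp only [← coeff_zero_eq_eval_zero, coeff_divX, coeff_derivative, Nat.cast_zero,
            zero_add, mul_one]
      _ = 2 * (k : ℝ) ^ 2 := by simp [derivative_comp, derivative_T_eval_one]
  rw [fejerPolynomial, eval_C_mul, hderiv]
  field_simp

theorem mul_eval_le (k : ℕ) {t : ℝ} (ht : t ∈ Icc (0 : ℝ) 1) :
    t * (fejerPolynomial k).eval t ≤ 1 / (k : ℝ) ^ 2 := by
  have hT : |(T ℝ k).eval (1 - 2 * t)| ≤ 1 :=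
    abs_eval_T_real_le_one k (abs_le.2 ⟨by linarith [ht.2], by linarith [ht.1]⟩)
  calc t * (fejerPolynomial k).eval t
      = (1 - (T ℝ k).eval (1 - 2 * t)) / (2 * (k : ℝ) ^ 2) := mul_eval k t
    _ ≤ 2 / (2 * (k : ℝ) ^ 2) := by gcongr; linarith [(abs_le.1 hT).1]
    _ = 1 / (k : ℝ) ^ 2 := by ring

theorem eval_mem_Icc {k : ℕ} (hk : k ≠ 0) {t : ℝ} (ht : t ∈ Icc (0 : ℝ) 1) :
    (fejerPolynomial k).eval t ∈ Icc (0 : ℝ) 1 := by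
  rcases ht.1.eq_or_lt with rfl | ht0
  · simp [eval_zero hk]
  have hmem : 1 - 2 * t ∈ Icc (-1 : ℝ) 1 := ⟨by linarith [ht.2], by linarith⟩
  have hT : (T ℝ k).eval (1 - 2 * t) ≤ 1 :=
    (abs_le.1 (abs_eval_T_real_le_one k (abs_le.2 hmem))).2
  have hlip : 1 - (T ℝ k).eval (1 - 2 * t) ≤ (k : ℝ) ^ 2 * (2 * t) := by
    have h := (le_abs_self _).trans
      (abs_eval_T_sub_eval_T_le k hmem (right_mem_Icc.2 (by norm_num)))
    rwa [T_eval_one, sub_sub_cancel, abs_of_pos (by positivity), Int.cast_natCast] at h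
  constructor
  · refine nonneg_of_mul_nonneg_right ?_ ht0
    rw [mul_eval]
    exact div_nonneg (sub_nonneg.2 hT) (by positivity)
  · refine le_of_mul_le_mul_left ?_ ht0
    rw [mul_eval, div_le_iff₀ (by positivity)]
    linarith

end fejerPolynomial

theorem exists_rpow_mul_abs_one_sub_pow_mul_le_rpow {α : ℝ} (hα : 0 ≤ α) (m : ℕ) {s k : ℕ}
    (hs : α ≤ s) (hk : k ≠ 0) :
    ∃ p : ℝ[X], p.natDegree ≤ m * (s * (k - 1)) ∧ ∀ t ∈ Icc (0 : ℝ) 1,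
      t ^ α * |1 - t ^ m * p.eval t| ≤ m * (k : ℝ) ^ (-(2 * α)) := by
  set K := fejerPolynomial k
  have hcoeff : (K ^ s).coeff 0 = 1 := by
    rw [coeff_zero_eq_eval_zero, eval_pow, fejerPolynomial.eval_zero hk, one_pow]
  obtain ⟨p, hdeg, hp⟩ := exists_X_pow_mul_eq_one_sub_pow hcoeff m
  refine ⟨p, hdeg.trans ?_, fun t ht => ?_⟩
  · gcongr
    exact natDegree_pow_le.trans (Nat.mul_le_mul_left s (fejerPolynomial.natDegree_le k))
  obtain ⟨hK0, hK1⟩ := fejerPolynomial.eval_mem_Icc hk ht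
  have heval : t ^ m * p.eval t = (1 - K.eval t ^ s) ^ m := by
    simpa using congrArg (eval t) hp
  have hpow : K.eval t ^ s ≤ K.eval t ^ α := by
    rw [← Real.rpow_natCast]
    exact Real.rpow_le_rpow_of_exponent_ge' hK0 hK1 hα hs
  calc t ^ α * |1 - t ^ m * p.eval t|
      ≤ t ^ α * (m * K.eval t ^ s) := by
        rw [heval]
        exact mul_le_mul_of_nonneg_left
          (abs_one_sub_one_sub_pow_le ⟨by positivity, pow_le_one₀ hK0 hK1⟩ m)
          (Real.rpow_nonneg ht.1 α)
    _ ≤ t ^ α * (m * K.eval t ^ α) := mul_le_mul_of_nonneg_left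
        (mul_le_mul_of_nonneg_left hpow (Nat.cast_nonneg m)) (Real.rpow_nonneg ht.1 α)
    _ = m * (t * K.eval t) ^ α := by rw [Real.mul_rpow ht.1 hK0]; ring
    _ ≤ m * (1 / (k : ℝ) ^ 2) ^ α := mul_le_mul_of_nonneg_left
        (Real.rpow_le_rpow (mul_nonneg ht.1 hK0) (fejerPolynomial.mul_eval_le k ht) hα)
        (Nat.cast_nonneg m)
    _ = m * (k : ℝ) ^ (-(2 * α)) := by rw [rpow_neg_two_mul (Nat.cast_nonneg k)]

theorem exists_rpow_mul_abs_one_sub_pow_mul_le {α : ℝ} (hα : 0 ≤ α) (m : ℕ) {n : ℕ}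
    (hn : n ≠ 0) :
    ∃ p : ℝ[X], p.natDegree ≤ n ∧ ∀ t ∈ Icc (0 : ℝ) 1,
      t ^ α * |1 - t ^ m * p.eval t| ≤
        m * ((m * ⌈α⌉₊ + 1 : ℕ) : ℝ) ^ (2 * α) * (n : ℝ) ^ (-(2 * α)) := by
  set d := m * ⌈α⌉₊ + 1
  obtain ⟨p, hdeg, hp⟩ := exists_rpow_mul_abs_one_sub_pow_mul_le_rpow hα m (Nat.le_ceil α)
    (Nat.succ_ne_zero (n / d))
  refine ⟨p, ?_, fun t ht => (hp t ht).trans ?_⟩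
  · calc p.natDegree ≤ m * ⌈α⌉₊ * (n / d) := by rwa [mul_assoc]
      _ ≤ d * (n / d) := Nat.mul_le_mul_right _ (Nat.le_succ _)
      _ ≤ n := Nat.mul_div_le n d
  have hn0 : (0 : ℝ) < n := by exact_mod_cast Nat.pos_of_ne_zero hn
  have hd0 : (0 : ℝ) < d := by positivity
  have hnd : (n : ℝ) / d ≤ (n / d).succ := by
    rw [div_le_iff₀' hd0]
    exact_mod_cast (Nat.lt_mul_div_succ n (Nat.succ_pos _)).le
  calc m * ((n / d).succ : ℝ) ^ (-(2 * α))
      ≤ m * ((n : ℝ) / d) ^ (-(2 * α)) := by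
        gcongr ?_ * ?_
        exact Real.rpow_le_rpow_of_nonpos (by positivity) hnd (by linarith)
    _ = m * (d : ℝ) ^ (2 * α) * (n : ℝ) ^ (-(2 * α)) := by
        rw [Real.div_rpow hn0.le hd0.le, Real.rpow_neg hd0.le, div_inv_eq_mul]
        ring

end

theorem stmt_18 (α : ℝ) (hα : 0 ≤ α) (m : ℕ) (hm : 1 ≤ m) :
    ∃ c C : ℝ, 0 < c ∧ ∀ n : ℕ, 2 ≤ n →
      (∀ p : Polynomial ℝ, p.natDegree ≤ n →
        ∃ t ∈ Set.Icc (0 : ℝ) 1,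
          c * (n : ℝ) ^ (-(2 * α)) ≤ t ^ α * |1 - t ^ m * p.eval t|) ∧
      (∃ p : Polynomial ℝ, p.natDegree ≤ n ∧
        ∀ t ∈ Set.Icc (0 : ℝ) 1,
          t ^ α * |1 - t ^ m * p.eval t| ≤ C * (n : ℝ) ^ (-(2 * α))) := by
  refine ⟨((m + 1) * Real.cosh 1) ^ (-(2 * α)) / Real.cosh 2,
    m * ((m * ⌈α⌉₊ + 1 : ℕ) : ℝ) ^ (2 * α), by positivity, fun n hn =>
    ⟨fun p hp => exists_le_rpow_mul_abs_one_sub_pow_mul hα (by omega) (by omega) hp,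
      exists_rpow_mul_abs_one_sub_pow_mul_le hα m (by omega)⟩⟩
end

section
/- Let λ ∈ (0,1), r ∈ (0,2), p ∈ [1,∞), and d ≥ 1. For the ball K_r = {x ∈ ℝ^d : |x| ≤ r} and any polynomial q of degree ≤ 2n with integer coefficients, (∫_{K_r} |λ − q(x)|^p dx)^{1/p} ≥ c(λ, d, p, r) · n^{−d/p} for some positive constant c(λ, d, p, r) independent of n and q. -/
/-!
The constant coefficient of an integer polynomial `q` is an integer, so `|λ - q 0|` is at least the
distance from `λ` to `ℤ`. Everything else is a bound for a point value of a polynomial of degree `N`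
by its `p`-th power integral over a neighbourhood, with constant `O(N ^ d)`.

In one variable, `P (cos θ) * sin θ ^ m` is up to a unimodular factor a polynomial in `exp (i θ)`
of degree `2 (N + m)`. Parseval and Cauchy-Schwarz, applied to a power of it, bound its maximum by
its `p`-th power mean at the cost of a factor `O(N)`. If `m p ≥ 1`, the factor `|sin θ| ^ (m p)`
is at most the Jacobian of `t = cos θ`, and `θ = π / 2` gives the value at `t = 0`. Applying this
bound in each coordinate separately, with Tonelli's theorem, gives `O(N ^ d)` in `d` variables.
-/

open MeasureTheory Metric Real Polynomial
open scoped ENNReal Topology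

section UnitCircle

theorem sq_norm_eval_le_circleAverage (Q : ℂ[X]) {z : ℂ} (hz : ‖z‖ = 1) :
    ‖Q.eval z‖ ^ 2 ≤ (Q.natDegree + 1) * circleAverage (fun w ↦ ‖Q.eval w‖ ^ 2) 0 1 := by
  have norm_eval_le : ‖Q.eval z‖ ≤ ∑ i ∈ Q.support, ‖Q.coeff i‖ := by
    rw [eval_eq_sum, Polynomial.sum]
    exact (norm_sum_le _ _).trans_eq (by simp [hz])
  have card_support_le : (Q.support.card : ℝ) ≤ Q.natDegree + 1 := by
    exact_mod_cast Q.card_supp_le_succ_natDegree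
  calc ‖Q.eval z‖ ^ 2 ≤ (∑ i ∈ Q.support, ‖Q.coeff i‖) ^ 2 := by gcongr
    _ ≤ Q.support.card * ∑ i ∈ Q.support, ‖Q.coeff i‖ ^ 2 := sq_sum_le_card_mul_sum_sq
    _ ≤ (Q.natDegree + 1) * ∑ i ∈ Q.support, ‖Q.coeff i‖ ^ 2 := by gcongr
    _ = _ := by rw [Q.sum_sq_norm_coeff_eq_circleAverage]

theorem circleAverage_rpow_le_rpow_mul {f : ℂ → ℝ} {c : ℂ} {R M : ℝ}
    (hf : ContinuousOn f (sphere c |R|)) (hf₀ : ∀ w ∈ sphere c |R|, 0 ≤ f w)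
    (hM : ∀ w ∈ sphere c |R|, f w ≤ M) {p s : ℝ} (hp : 0 ≤ p) (hps : p ≤ s) :
    circleAverage (fun w ↦ f w ^ s) c R ≤
      M ^ (s - p) * circleAverage (fun w ↦ f w ^ p) c R := by
  have hps' : 0 ≤ s - p := sub_nonneg.2 hps
  have circleIntegrable {q : ℝ} (hq : 0 ≤ q) : CircleIntegrable (fun w ↦ f w ^ q) c R :=
    (hf.rpow_const fun _ _ ↦ .inr hq).circleIntegrable'
  rw [← smul_eq_mul, ← circleAverage_fun_smul]
  refine circleAverage_mono (circleIntegrable (hp.trans hps))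
    ((circleIntegrable hp).const_smul (a := M ^ (s - p))) fun w hw ↦ ?_
  calc f w ^ s = f w ^ (s - p) * f w ^ p := by
        rw [← rpow_add_of_nonneg (hf₀ w hw) hps' hp, sub_add_cancel]
    _ ≤ M ^ (s - p) * f w ^ p := by
        have := hf₀ w hw
        gcongr
        exact hM w hw

/-- **Nikolskii's inequality** on the unit circle. -/
theorem norm_eval_rpow_le_circleAverage (Q : ℂ[X]) {p : ℝ} (hp : 0 < p) {z : ℂ} (hz : ‖z‖ = 1) :
    ‖Q.eval z‖ ^ p ≤
      (⌈p⌉₊ * Q.natDegree + 1) * circleAverage (fun w ↦ ‖Q.eval w‖ ^ p) 0 1 := by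
  set k := ⌈p⌉₊
  have le_exponent : p ≤ (k * 2 : ℕ) := (Nat.le_ceil p).trans (by norm_cast; lia)
  have sq_norm_eval_pow (w : ℂ) : ‖(Q ^ k).eval w‖ ^ 2 = ‖Q.eval w‖ ^ ((k * 2 : ℕ) : ℝ) := by
    rw [eval_pow, norm_pow, ← pow_mul, rpow_natCast]
  have average_nonneg : 0 ≤ circleAverage (fun w ↦ ‖Q.eval w‖ ^ p) 0 1 :=
    circleAverage_nonneg_of_nonneg fun _ _ ↦ by positivity
  obtain ⟨w₀, hw₀, le_max⟩ := (isCompact_sphere (0 : ℂ) 1).exists_isMaxOn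
    (NormedSpace.sphere_nonempty.2 zero_le_one) (f := fun w ↦ ‖Q.eval w‖) (by fun_prop)
  rw [mem_sphere_zero_iff_norm] at hw₀
  set M := ‖Q.eval w₀‖ with M_def
  suffices M_rpow_le :
      M ^ p ≤ (k * Q.natDegree + 1) * circleAverage (fun w ↦ ‖Q.eval w‖ ^ p) 0 1 by
    have : ‖Q.eval z‖ ≤ M := le_max (by simpa using hz)
    exact M_rpow_le.trans' (by gcongr)
  rcases (norm_nonneg (Q.eval w₀)).eq_or_lt' with M_eq | M_pos
  · rw [M_def, M_eq, zero_rpow hp.ne']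
    positivity
  refine le_of_mul_le_mul_left ?_ (rpow_pos_of_pos M_pos ((k * 2 : ℕ) - p))
  calc M ^ ((k * 2 : ℕ) - p) * M ^ p = ‖(Q ^ k).eval w₀‖ ^ 2 := by
        rw [← rpow_add M_pos, sub_add_cancel, sq_norm_eval_pow]
    _ ≤ ((Q ^ k).natDegree + 1) * circleAverage (fun w ↦ ‖(Q ^ k).eval w‖ ^ 2) 0 1 :=
        sq_norm_eval_le_circleAverage _ hw₀
    _ ≤ (k * Q.natDegree + 1) *
          (M ^ ((k * 2 : ℕ) - p) * circleAverage (fun w ↦ ‖Q.eval w‖ ^ p) 0 1) := by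
        rw [natDegree_pow, Nat.cast_mul]
        simp only [sq_norm_eval_pow]
        gcongr
        exact circleAverage_rpow_le_rpow_mul (by fun_prop) (fun _ _ ↦ norm_nonneg _)
          (fun w hw ↦ le_max (by simpa using hw)) hp.le le_exponent
    _ = _ := by ring

theorem circleAverage_re_mul_abs_im {φ : ℝ → ℝ} (hφ : Continuous φ) :
    circleAverage (fun z ↦ φ z.re * |z.im|) 0 1 = π⁻¹ * ∫ t in (-1)..1, φ t := by
  set g : ℝ → ℝ := fun θ ↦ φ (cos θ) * |sin θ| with g_def
  have g_integrable (a b : ℝ) : IntervalIntegrable g volume a b :=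
    (by fun_prop : Continuous g).intervalIntegrable a b
  have upper_half : ∫ θ in 0..π, g θ = ∫ t in (-1)..1, φ t := by
    have substitution := intervalIntegral.integral_comp_mul_deriv (a := 0) (b := π)
      (fun θ _ ↦ hasDerivAt_cos θ) (by fun_prop) hφ
    rw [cos_zero, cos_pi] at substitution
    rw [intervalIntegral.integral_symm 1, ← substitution, ← intervalIntegral.integral_neg]
    refine intervalIntegral.integral_congr fun θ hθ ↦ ?_
    rw [Set.uIcc_of_le pi_nonneg] at hθ
    simp [g_def, abs_of_nonneg (sin_nonneg_of_mem_Icc hθ)]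
  have lower_half : ∫ θ in π..2 * π, g θ = ∫ θ in 0..π, g θ := by
    have reflection := intervalIntegral.integral_comp_sub_left (a := 0) (b := π) g (2 * π)
    rw [sub_zero, show 2 * π - π = π by ring] at reflection
    simpa [g_def, cos_two_pi_sub, sin_two_pi_sub] using reflection.symm
  calc circleAverage (fun z ↦ φ z.re * |z.im|) 0 1 = (2 * π)⁻¹ * ∫ θ in 0..2 * π, g θ := by
        simp [circleAverage_def, circleMap, Complex.exp_ofReal_mul_I_re,
          Complex.exp_ofReal_mul_I_im, g_def]
    _ = (2 * π)⁻¹ * (2 * ∫ t in (-1)..1, φ t) := by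
        rw [← intervalIntegral.integral_add_adjacent_intervals (g_integrable 0 π)
          (g_integrable π _), lower_half, upper_half, two_mul (∫ t in (-1)..1, φ t)]
    _ = π⁻¹ * ∫ t in (-1)..1, φ t := by ring

end UnitCircle

section Joukowski

theorem eval_aeval_eq_eval {σ R : Type*} [CommSemiring R] (f : σ → R[X]) (F : MvPolynomial σ R)
    (a : R) : (MvPolynomial.aeval f F).eval a = MvPolynomial.eval (fun i ↦ (f i).eval a) F := by
  rw [← coe_aeval_eq_eval, ← MvPolynomial.coe_aeval_eq_eval]
  exact MvPolynomial.comp_aeval_apply _ _ F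

/-- The polynomial `z ^ N * P ((z + z⁻¹) / 2)`, where `N` is the degree of `P`. It transplants `P`
from `[-1, 1]` to the unit circle, since `(z + z⁻¹) / 2` is the real part of `z` there. -/
noncomputable def joukowskiLift (P : ℝ[X]) : ℂ[X] :=
  MvPolynomial.aeval ![C 2⁻¹ * (X ^ 2 + 1), X]
    ((P.map (algebraMap ℝ ℂ)).homogenize P.natDegree)

theorem natDegree_joukowskiLift_le (P : ℝ[X]) : (joukowskiLift P).natDegree ≤ 2 * P.natDegree := by
  rw [mul_comm]
  refine MvPolynomial.aeval_natDegree_le _ (isHomogeneous_homogenize _).totalDegree_le _ fun i ↦ ?_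
  fin_cases i
  · change (C 2⁻¹ * (X ^ 2 + 1) : ℂ[X]).natDegree ≤ 2
    compute_degree
  · simp

theorem inv_two_mul_sq_add_one {z : ℂ} (hz : ‖z‖ = 1) : 2⁻¹ * (z ^ 2 + 1) = z * z.re := by
  have mul_conj : z * (starRingEnd ℂ) z = 1 := by rw [Complex.mul_conj']; simp [hz]
  rw [Complex.re_eq_add_conj]
  linear_combination (-1 / 2) * mul_conj

theorem inv_two_mul_sq_sub_one {z : ℂ} (hz : ‖z‖ = 1) :
    2⁻¹ * (z ^ 2 - 1) = z * z.im * Complex.I := by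
  have mul_conj : z * (starRingEnd ℂ) z = 1 := by rw [Complex.mul_conj']; simp [hz]
  rw [Complex.im_eq_sub_conj]
  field_simp
  linear_combination mul_conj

theorem norm_eval_joukowskiLift (P : ℝ[X]) {z : ℂ} (hz : ‖z‖ = 1) :
    ‖(joukowskiLift P).eval z‖ = |P.eval z.re| := by
  have hz0 : z ≠ 0 := norm_ne_zero_iff.1 (by simp [hz])
  rw [joukowskiLift, eval_aeval_eq_eval, eval_homogenize (natDegree_map_le) _ (by simpa using hz0)]
  have : z * z.re / z = algebraMap ℝ ℂ z.re := mul_div_cancel_left₀ _ hz0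
  simp [inv_two_mul_sq_add_one hz, this, hz, -Complex.coe_algebraMap, eval_map_algebraMap,
    aeval_algebraMap_apply]

end Joukowski

theorem ofReal_setIntegral_abs_rpow {X : Type*} [TopologicalSpace X] [T2Space X]
    [MeasurableSpace X] [OpensMeasurableSpace X] {μ : Measure X} [IsFiniteMeasureOnCompacts μ]
    {f : X → ℝ} (hf : Continuous f) {p : ℝ} (hp : 0 ≤ p) {s : Set X} (hs : IsCompact s) :
    ENNReal.ofReal (∫ x in s, |f x| ^ p ∂μ) = ∫⁻ x in s, ‖f x‖ₑ ^ p ∂μ := by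
  have continuous_rpow : Continuous fun x ↦ |f x| ^ p := hf.abs.rpow_const fun _ ↦ .inr hp
  rw [ofReal_integral_eq_lintegral_ofReal (continuous_rpow.continuousOn.integrableOn_compact hs)
    (.of_forall fun x ↦ by positivity)]
  simp only [enorm_eq_ofReal_abs, ENNReal.ofReal_rpow_of_nonneg (abs_nonneg _) hp]

section OneVariable

theorem eval_re_mul_im_pow_rpow_le_integral (P : ℝ[X]) {p : ℝ} (hp : 0 < p) {m : ℕ}
    (hm : 1 ≤ m * p) {z : ℂ} (hz : ‖z‖ = 1) :
    (|P.eval z.re| * |z.im| ^ m) ^ p ≤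
      (⌈p⌉₊ * (2 * P.natDegree + 2 * m) + 1) * (π⁻¹ * ∫ t in (-1)..1, |P.eval t| ^ p) := by
  set Q : ℂ[X] := joukowskiLift P * (C 2⁻¹ * (X ^ 2 - 1)) ^ m with Q_def
  have natDegree_le : Q.natDegree ≤ 2 * P.natDegree + 2 * m := by
    refine natDegree_mul_le_of_le (natDegree_joukowskiLift_le P) ?_
    rw [mul_comm 2 m]
    exact natDegree_pow_le_of_le m (by compute_degree)
  have norm_eval {w : ℂ} (hw : ‖w‖ = 1) : ‖Q.eval w‖ = |P.eval w.re| * |w.im| ^ m := by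
    have : ‖(C 2⁻¹ * (X ^ 2 - 1) : ℂ[X]).eval w‖ = |w.im| := by
      simp only [eval_mul, eval_C, eval_sub, eval_pow, eval_X, eval_one,
        inv_two_mul_sq_sub_one hw]
      simp [hw]
    rw [Q_def, eval_mul, eval_pow, norm_mul, norm_pow, norm_eval_joukowskiLift P hw, this]
  have continuous_rpow {X : Type} [TopologicalSpace X] {f : X → ℝ} (hf : Continuous f) :
      Continuous fun x ↦ f x ^ p := hf.rpow_const fun _ ↦ .inr hp.le
  have average_le : circleAverage (fun w ↦ ‖Q.eval w‖ ^ p) 0 1 ≤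
      circleAverage (fun w ↦ |P.eval w.re| ^ p * |w.im|) 0 1 := by
    refine circleAverage_mono
      (continuous_rpow (by fun_prop)).continuousOn.circleIntegrable'
      (((continuous_rpow (f := fun w : ℂ ↦ |P.eval w.re|) (by fun_prop)).mul
        (by fun_prop)).continuousOn.circleIntegrable') fun w hw ↦ ?_
    have hw : ‖w‖ = 1 := by simpa using hw
    have weight_le : (|w.im| ^ m) ^ p ≤ |w.im| := by
      rw [← rpow_natCast, ← rpow_mul (abs_nonneg _)]
      exact rpow_le_self_of_le_one (abs_nonneg _) (hw ▸ Complex.abs_im_le_norm w) hm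
    rw [norm_eval hw, mul_rpow (by positivity) (by positivity)]
    gcongr
  rw [← norm_eval hz, ← circleAverage_re_mul_abs_im (continuous_rpow (by fun_prop))]
  refine (norm_eval_rpow_le_circleAverage Q hp hz).trans ?_
  gcongr
  · exact circleAverage_nonneg_of_nonneg fun _ _ ↦ by positivity
  · exact_mod_cast natDegree_le

theorem exists_abs_eval_zero_rpow_le_integral {p : ℝ} (hp : 0 < p) :
    ∃ C > 0, ∀ P : ℝ[X],
      |P.eval 0| ^ p ≤ C * (P.natDegree + 1) * ∫ t in (-1)..1, |P.eval t| ^ p := by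
  set k := ⌈p⌉₊
  set m := ⌈p⁻¹⌉₊
  have hm : 1 ≤ m * p := (inv_le_iff_one_le_mul₀ hp).1 (Nat.le_ceil p⁻¹)
  refine ⟨(2 * k + 2 * k * m + 1) * π⁻¹, by positivity, fun P ↦ ?_⟩
  have integral_nonneg : 0 ≤ ∫ t in (-1)..1, |P.eval t| ^ p :=
    intervalIntegral.integral_nonneg (by norm_num) fun t _ ↦ by positivity
  calc |P.eval 0| ^ p
      ≤ (k * (2 * P.natDegree + 2 * m) + 1) * (π⁻¹ * ∫ t in (-1)..1, |P.eval t| ^ p) := by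
        simpa using eval_re_mul_im_pow_rpow_le_integral P hp hm Complex.norm_I
    _ ≤ ((2 * k + 2 * k * m + 1) * (P.natDegree + 1)) *
          (π⁻¹ * ∫ t in (-1)..1, |P.eval t| ^ p) := by
        gcongr
        have : (0 : ℝ) ≤ (2 * k * m + 1) * P.natDegree + 2 * k := by positivity
        linarith
    _ = _ := by ring

theorem exists_enorm_eval_rpow_le_lintegral_closedBall {p : ℝ} (hp : 0 < p) {a : ℝ} (ha : 0 < a) :
    ∃ C > 0, ∀ (P : ℝ[X]) (x : ℝ), ‖P.eval x‖ₑ ^ p ≤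
      ENNReal.ofReal (C * (P.natDegree + 1)) * ∫⁻ t in closedBall x a, ‖P.eval t‖ₑ ^ p := by
  obtain ⟨C₀, hC₀, eval_zero_le⟩ := exists_abs_eval_zero_rpow_le_integral hp
  refine ⟨C₀ * a⁻¹, by positivity, fun P x ↦ ?_⟩
  set L : ℝ[X] := C a * X + C x with L_def
  have natDegree_comp_le : (P.comp L).natDegree ≤ P.natDegree :=
    natDegree_comp_le.trans (mul_le_of_le_one_right' natDegree_linear_le)
  have integral_comp : ∫ t in (-1)..1, |(P.comp L).eval t| ^ p =
      a⁻¹ * ∫ t in closedBall x a, |P.eval t| ^ p := by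
    simp only [L_def, eval_comp, eval_add, eval_mul, eval_C, eval_X]
    rw [intervalIntegral.integral_comp_mul_add (fun t ↦ |P.eval t| ^ p) ha.ne',
      intervalIntegral.integral_of_le (by linarith), ← integral_Icc_eq_integral_Ioc,
      closedBall_eq_Icc, smul_eq_mul]
    ring_nf
  have real_bound : |P.eval x| ^ p ≤
      C₀ * a⁻¹ * (P.natDegree + 1) * ∫ t in closedBall x a, |P.eval t| ^ p := by
    calc |P.eval x| ^ p = |(P.comp L).eval 0| ^ p := by simp [L_def]
      _ ≤ C₀ * ((P.comp L).natDegree + 1) * ∫ t in (-1)..1, |(P.comp L).eval t| ^ p :=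
          eval_zero_le _
      _ ≤ C₀ * (P.natDegree + 1) * (a⁻¹ * ∫ t in closedBall x a, |P.eval t| ^ p) := by
          rw [integral_comp]
          gcongr
      _ = _ := by ring
  rw [← ofReal_setIntegral_abs_rpow P.continuous hp.le (isCompact_closedBall x a),
    ← ENNReal.ofReal_mul (by positivity), enorm_eq_ofReal_abs,
    ENNReal.ofReal_rpow_of_nonneg (abs_nonneg _) hp.le]
  exact ENNReal.ofReal_le_ofReal real_bound

end OneVariable

theorem le_prod_mul_lmarginal {ι : Type*} [DecidableEq ι] {X : ι → Type*}
    [∀ i, MeasurableSpace (X i)] (μ : ∀ i, Measure (X i)) [∀ i, SigmaFinite (μ i)]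
    {F : (∀ i, X i) → ℝ≥0∞} (hF : Measurable F) {K : ι → ℝ≥0∞} {c : ∀ i, X i}
    (slice_le : ∀ x i, F (Function.update x i (c i)) ≤ K i * ∫⁻ t, F (Function.update x i t) ∂μ i)
    (s : Finset ι) {x : ∀ i, X i} (hx : ∀ i ∈ s, x i = c i) :
    F x ≤ (∏ i ∈ s, K i) * (∫⋯∫⁻_s, F ∂μ) x := by
  induction s using Finset.induction_on generalizing x with
  | empty => simp
  | insert i s hi ih =>
    have ih_update (t : X i) :
        F (Function.update x i t) ≤ (∏ j ∈ s, K j) * (∫⋯∫⁻_s, F ∂μ) (Function.update x i t) := by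
      refine ih fun j hj ↦ ?_
      rw [Function.update_of_ne (ne_of_mem_of_not_mem hj hi), hx j (Finset.mem_insert_of_mem hj)]
    have measurable_slice : Measurable fun t ↦ (∫⋯∫⁻_s, F ∂μ) (Function.update x i t) :=
      (hF.lmarginal μ).comp (measurable_update x)
    calc F x = F (Function.update x i (c i)) := by
          rw [← hx i (Finset.mem_insert_self i s), Function.update_eq_self]
      _ ≤ K i * ∫⁻ t, F (Function.update x i t) ∂μ i := slice_le x i
      _ ≤ K i * ∫⁻ t, (∏ j ∈ s, K j) * (∫⋯∫⁻_s, F ∂μ) (Function.update x i t) ∂μ i := by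
          gcongr with t
          exact ih_update t
      _ = (∏ j ∈ insert i s, K j) * (∫⋯∫⁻_insert i s, F ∂μ) x := by
          rw [lintegral_const_mul _ measurable_slice, lmarginal_insert F hF hi,
            Finset.prod_insert hi, mul_assoc]

section SeveralVariables

theorem exists_polynomial_eval_eq_eval_update {σ R : Type*} [DecidableEq σ] [CommSemiring R]
    (P : MvPolynomial σ R) (y : σ → R) (i : σ) :
    ∃ L : R[X], L.natDegree ≤ P.totalDegree ∧ ∀ t, L.eval t = P.eval (Function.update y i t) := by
  refine ⟨MvPolynomial.aeval (Function.update (fun j ↦ C (y j)) i X) P, ?_, fun t ↦ ?_⟩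
  · rw [← mul_one P.totalDegree]
    refine MvPolynomial.aeval_natDegree_le P le_rfl _ fun j ↦ ?_
    rcases eq_or_ne j i with rfl | hj
    · simpa using natDegree_X_le
    · simp [hj]
  · rw [eval_aeval_eq_eval]
    congr 2 with j
    rcases eq_or_ne j i with rfl | hj
    · simp
    · simp [hj]

variable {ι : Type*} [Fintype ι]

theorem exists_enorm_eval_rpow_le_setLIntegral {p : ℝ} (hp : 0 < p) {x : ι → ℝ} {U : Set (ι → ℝ)}
    (hU : U ∈ 𝓝 x) :
    ∃ C > 0, ∀ P : MvPolynomial ι ℝ, ‖P.eval x‖ₑ ^ p ≤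
      ENNReal.ofReal (C * (P.totalDegree + 1) ^ Fintype.card ι) * ∫⁻ y in U, ‖P.eval y‖ₑ ^ p := by
  classical
  obtain ⟨a, ha, ball_subset⟩ := nhds_basis_closedBall.mem_iff.1 hU
  obtain ⟨C, hC, univariate_bound⟩ := exists_enorm_eval_rpow_le_lintegral_closedBall hp ha
  refine ⟨C ^ Fintype.card ι, by positivity, fun P ↦ ?_⟩
  set μ : ι → Measure ℝ := fun i ↦ volume.restrict (closedBall (x i) a)
  set F : (ι → ℝ) → ℝ≥0∞ := fun y ↦ ‖P.eval y‖ₑ ^ p with F_def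
  have measurable_F : Measurable F := P.continuous_eval.measurable.enorm.pow_const p
  have slice_bound (y : ι → ℝ) (i : ι) : F (Function.update y i (x i)) ≤
      ENNReal.ofReal (C * (P.totalDegree + 1)) * ∫⁻ t, F (Function.update y i t) ∂μ i := by
    obtain ⟨L, natDegree_le, eval_L⟩ := exists_polynomial_eval_eq_eval_update P y i
    simp only [F_def, ← eval_L]
    refine (univariate_bound L (x i)).trans ?_
    gcongr
  calc F x ≤ (∏ _i : ι, ENNReal.ofReal (C * (P.totalDegree + 1))) * ∫⁻ y, F y ∂Measure.pi μ := by
        simpa only [lmarginal_univ] using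
          le_prod_mul_lmarginal μ measurable_F slice_bound Finset.univ fun _ _ ↦ rfl
    _ = ENNReal.ofReal (C ^ Fintype.card ι * (P.totalDegree + 1) ^ Fintype.card ι) *
          ∫⁻ y in closedBall x a, F y := by
        rw [Finset.prod_const, Finset.card_univ, ← ENNReal.ofReal_pow (by positivity), mul_pow,
          closedBall_pi x ha.le, volume_pi, Measure.restrict_pi_pi]
    _ ≤ _ := by gcongr

theorem exists_abs_eval_rpow_le_integral_closedBall {p : ℝ} (hp : 0 < p) (x : EuclideanSpace ℝ ι)
    {r : ℝ} (hr : 0 < r) :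
    ∃ C > 0, ∀ P : MvPolynomial ι ℝ, |P.eval x| ^ p ≤
      C * (P.totalDegree + 1) ^ Fintype.card ι * ∫ y in closedBall x r, |P.eval y| ^ p := by
  have preimage_mem : WithLp.toLp 2 ⁻¹' closedBall x r ∈ 𝓝 (WithLp.ofLp x) :=
    (PiLp.continuous_toLp 2 _).continuousAt.preimage_mem_nhds (closedBall_mem_nhds _ hr)
  obtain ⟨C, hC, bound⟩ := exists_enorm_eval_rpow_le_setLIntegral hp preimage_mem
  refine ⟨C, hC, fun P ↦ ?_⟩
  have continuous_eval : Continuous fun y : EuclideanSpace ℝ ι ↦ P.eval y :=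
    P.continuous_eval.comp (PiLp.continuous_ofLp 2 _)
  have lintegral_eq : ∫⁻ y in WithLp.toLp 2 ⁻¹' closedBall x r, ‖P.eval y‖ₑ ^ p =
      ENNReal.ofReal (∫ y in closedBall x r, |P.eval y| ^ p) := by
    rw [ofReal_setIntegral_abs_rpow continuous_eval hp.le (isCompact_closedBall x r)]
    exact (PiLp.volume_preserving_toLp ι).setLIntegral_comp_preimage_emb
      (MeasurableEquiv.toLp 2 (ι → ℝ)).measurableEmbedding (fun y ↦ ‖P.eval y‖ₑ ^ p) _
  have enorm_bound := bound P
  rwa [lintegral_eq, ← ENNReal.ofReal_mul (by positivity), enorm_eq_ofReal_abs,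
    ENNReal.ofReal_rpow_of_nonneg (abs_nonneg _) hp.le,
    ENNReal.ofReal_le_ofReal_iff (by positivity)] at enorm_bound

end SeveralVariables

section IntegerCoefficients

variable {σ : Type*}

theorem abs_sub_round_le_abs_sub_eval_zero (q : MvPolynomial σ ℤ) (lam : ℝ) :
    |lam - round lam| ≤ |lam - (q.map (Int.castRingHom ℝ)).eval 0| := by
  rw [MvPolynomial.eval_zero, MvPolynomial.constantCoeff_map]
  exact round_le lam _

theorem totalDegree_C_sub_map_le (q : MvPolynomial σ ℤ) (lam : ℝ) :
    (MvPolynomial.C lam - q.map (Int.castRingHom ℝ)).totalDegree ≤ q.totalDegree :=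
  (MvPolynomial.totalDegree_sub _ _).trans <| max_le (by simp) <|
    Finset.sup_mono (MvPolynomial.support_map_subset _ _)

end IntegerCoefficients

theorem stmt_19_general {ι : Type*} [Fintype ι] {lam r p : ℝ}
    (hlam : lam ∉ Set.range ((↑) : ℤ → ℝ)) (hr : 0 < r) (hp : 0 < p) :
    ∃ c : ℝ, 0 < c ∧ ∀ n : ℕ, 1 ≤ n → ∀ q : MvPolynomial ι ℤ, q.totalDegree ≤ 2 * n →
      c * (n : ℝ) ^ (-(Fintype.card ι : ℝ) / p) ≤
        (∫ x in closedBall (0 : EuclideanSpace ℝ ι) r,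
          |lam - MvPolynomial.eval (fun i => x i) (q.map (Int.castRingHom ℝ))| ^ p) ^ (1 / p) := by
  set d := Fintype.card ι
  obtain ⟨C, hC, value_le⟩ :=
    exists_abs_eval_rpow_le_integral_closedBall hp (0 : EuclideanSpace ℝ ι) hr
  have dist_pos : 0 < |lam - round lam| := abs_pos.2 <| sub_ne_zero.2 fun h ↦ hlam ⟨_, h.symm⟩
  refine ⟨(|lam - round lam| ^ p / (C * 3 ^ d)) ^ p⁻¹, by positivity, fun n hn q hq ↦ ?_⟩
  set P := MvPolynomial.C lam - q.map (Int.castRingHom ℝ) with P_def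
  have eval_P (x : ι → ℝ) : P.eval x = lam - (q.map (Int.castRingHom ℝ)).eval x := by simp [P_def]
  have degree_le : (P.totalDegree : ℝ) + 1 ≤ 3 * n := by
    exact_mod_cast (Nat.succ_le_succ ((totalDegree_C_sub_map_le q lam).trans hq)).trans (by lia)
  change _ ≤ (∫ x in closedBall (0 : EuclideanSpace ℝ ι) r, |lam - _| ^ p) ^ (1 / p)
  simp only [← eval_P]
  set I := ∫ x in closedBall (0 : EuclideanSpace ℝ ι) r, |P.eval x| ^ p
  have I_nonneg : 0 ≤ I := integral_nonneg fun _ ↦ by positivity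
  have dist_rpow_le : |lam - round lam| ^ p ≤ C * (3 * n) ^ d * I :=
    calc |lam - round lam| ^ p ≤ |P.eval 0| ^ p := by
          rw [eval_P]
          exact rpow_le_rpow (abs_nonneg _) (abs_sub_round_le_abs_sub_eval_zero q lam) hp.le
      _ ≤ C * (P.totalDegree + 1) ^ d * I := value_le P
      _ ≤ C * (3 * n) ^ d * I := by gcongr
  rw [one_div, le_rpow_inv_iff_of_pos (by positivity) I_nonneg hp]
  calc ((|lam - round lam| ^ p / (C * 3 ^ d)) ^ p⁻¹ * (n : ℝ) ^ (-(d : ℝ) / p)) ^ p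
      = |lam - round lam| ^ p / (C * (3 * n) ^ d) := by
        rw [mul_rpow (by positivity) (by positivity), rpow_inv_rpow (by positivity) hp.ne',
          ← rpow_mul n.cast_nonneg, div_mul_cancel₀ _ hp.ne', rpow_neg n.cast_nonneg, rpow_natCast,
          ← div_eq_mul_inv, div_div, mul_assoc, mul_pow]
    _ ≤ I := (div_le_iff₀' (by positivity)).2 dist_rpow_le

theorem stmt_19 (lam : ℝ) (hlam : lam ∈ Set.Ioo (0 : ℝ) 1)
    (r : ℝ) (hr : r ∈ Set.Ioo (0 : ℝ) 2)
    (p : ℝ) (hp : 1 ≤ p) (d : ℕ) (hd : 1 ≤ d) :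
    ∃ c : ℝ, 0 < c ∧ ∀ n : ℕ, 1 ≤ n → ∀ q : MvPolynomial (Fin d) ℤ,
      q.totalDegree ≤ 2 * n →
        c * (n : ℝ) ^ (-(d : ℝ) / p) ≤
          (∫ x in Metric.closedBall (0 : EuclideanSpace ℝ (Fin d)) r,
            |lam - MvPolynomial.eval (fun i => x i) (q.map (Int.castRingHom ℝ))| ^ p) ^ (1 / p) := by
  have not_int : lam ∉ Set.range ((↑) : ℤ → ℝ) := by
    rintro ⟨m, rfl⟩
    obtain ⟨h_pos, h_lt_one⟩ := hlam
    norm_cast at h_pos h_lt_one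
    lia
  simpa using stmt_19_general (ι := Fin d) not_int hr.1 (zero_lt_one.trans_le hp)
end
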